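/- arXiv:1910.00493 — 7 statements merged into one kernel-verified Lean document; each statement's English description precedes it below -/
import Mathlib

section
/- Let r > 0. (a) The formula ‖(ρ,μ)‖_{TV,r} := sup{ (∫ F dρ + ∫ RF dμ)/‖F‖_{∞,r} : F ∈ C̄_r(𝕋^d×ℝ₊), F ≠ 0 } defines a norm on 𝓜_r(𝕋^d×ℝ₊) × 𝓜(𝕋^d) satisfying max{‖ρ‖_{TV,r}, ‖μ‖_{TV}} ≤ ‖(ρ,μ)‖_{TV,r} ≤ ‖ρ‖_{TV,r} + ‖μ‖_{TV}. (b) There exists a unique map I = (I¹, I²) : 𝓜̄_r(𝕋^d×ℝ₊) → 𝓜_r(𝕋^d×ℝ₊) × 𝓜(𝕋^d) such that π(F) = ∫ F dI¹(π) + ∫ RF dI²(π) for every F ∈ C̄_r(𝕋^d×ℝ₊) and every π ∈ 𝓜̄_r(𝕋^d×ℝ₊); this map I is a surjective linear isometry for the norm of (a), with inverse J given by J(ρ,μ)(F) = ∫ F dρ + ∫ RF dμ. -/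
/-!
The space `C̄_r(𝕋^d × ℝ₊)` is `C(𝕋^d × [0,1])` in disguise: with `t = λ/(1+λ)`, a function `g` on the
compact space `𝕋^d × [0,1]` corresponds to `F(u,λ) = (1+λ^r) g(u,t)`, the recession function of `F`
being the boundary value `g(·,1)` (`lift_memBrC`, `lift_isRecession`, `exists_lift`). The norm
`‖F‖_{∞,r}` becomes the sup norm of `g`, since the interior `t < 1` is dense.

Norm estimates. The bound `≤ ‖ρ‖_{TV,r} + ‖μ‖_{TV}` is immediate (`pairing_le`). Conversely, the Hahn
signs of `ρ` and `μ` live on the disjoint sets `t < 1` and `t = 1`, so they glue to one measurable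
function with values in `[-1,1]`; approximating it by continuous functions in `L¹` of
`(1+λ^r)|ρ| + |μ|` shows that the dual norm is exactly `‖ρ‖_{TV,r} + ‖μ‖_{TV}`
(`exists_almost_norming`, `pairNorm_eq`). This gives both inequalities and definiteness, hence also
uniqueness of the representing pair (`representation_unique`).

Existence. A bounded functional on `C̄_r` is transported to `C(𝕋^d × [0,1])`. Its positive part
`f ↦ sup {Ψ h : 0 ≤ h ≤ f}` is additive by the Riesz decomposition property, so the
Riesz–Markov–Kakutani theorem for positive functionals, applied to the positive part `P` and to
`P - Ψ`, represents `Ψ` by a difference of two finite measures (`signed_riesz`). Each of them splits into its part on `t < 1`, divided by the weight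
`1+λ^r`, and its part on `t = 1` (`exists_split`), which yields `ρ` and `μ`.
-/

open MeasureTheory Filter Topology NNReal

noncomputable section

/-- The `d`-dimensional torus. -/
abbrev Td (d : ℕ) : Type := Fin d → AddCircle (1 : ℝ)

/-- The cylinder `𝕋^d × ℝ₊`. -/
abbrev Cyl (d : ℕ) : Type := Td d × ℝ≥0

variable {d : ℕ}

/-- The weighted sup norm `‖F‖_{∞,r}`. -/
def wnorm (r : ℝ) (F : Cyl d → ℝ) : ℝ :=
  ⨆ p : Cyl d, |F p| / (1 + (p.2 : ℝ) ^ r)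

/-- Membership in `B_r C(𝕋^d × ℝ₊)`: continuous with finite `‖·‖_{∞,r}`-norm. -/
def MemBrC (r : ℝ) (F : Cyl d → ℝ) : Prop :=
  Continuous F ∧ ∃ C : ℝ, ∀ p : Cyl d, |F p| ≤ C * (1 + (p.2 : ℝ) ^ r)

/-- `f` is the recession function `RF` of `F`: `F(u,λ)/(1+λ^r) → f(u)` uniformly in `u`;
a function `F` belongs to `C̄_r(𝕋^d × ℝ₊)` iff `MemBrC r F ∧ ∃ f, IsRecession r F f`. -/
def IsRecession (r : ℝ) (F : Cyl d → ℝ) (f : Td d → ℝ) : Prop :=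
  Continuous f ∧
    Tendsto (fun lam : ℝ≥0 => ⨆ u : Td d, |F (u, lam) / (1 + (lam : ℝ) ^ r) - f u|)
      atTop (𝓝 0)

/-- Membership in `C̄_r(𝕋^d × ℝ₊)`. -/
def MemCbar (r : ℝ) (F : Cyl d → ℝ) : Prop :=
  MemBrC r F ∧ ∃ f : Td d → ℝ, IsRecession r F f

/-- The signed integral of `f` against a signed measure. -/
def sint {α : Type*} [MeasurableSpace α] (ρ : SignedMeasure α) (f : α → ℝ) : ℝ :=
  ∫ x, f x ∂ρ.toJordanDecomposition.posPart - ∫ x, f x ∂ρ.toJordanDecomposition.negPart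

/-- Membership in `𝓜_r(𝕋^d × ℝ₊)`: finite signed Borel measure with finite `r`-th moment. -/
def MemMr (r : ℝ) (ρ : SignedMeasure (Cyl d)) : Prop :=
  ∫⁻ p : Cyl d, ENNReal.ofReal ((p.2 : ℝ) ^ r) ∂ρ.totalVariation < ⊤

/-- The norm `‖ρ‖_{TV,r} = ∫ (1+λ^r) d|ρ|`. -/
def tvr (r : ℝ) (ρ : SignedMeasure (Cyl d)) : ℝ :=
  (∫⁻ p : Cyl d, ENNReal.ofReal (1 + (p.2 : ℝ) ^ r) ∂ρ.totalVariation).toReal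

/-- The total variation norm of a signed measure on the torus. -/
def tvT (μ : SignedMeasure (Td d)) : ℝ :=
  (μ.totalVariation Set.univ).toReal

/-- The norm `‖(ρ,μ)‖_{TV,r} = sup_{0 ≠ F ∈ C̄_r} (∫ F dρ + ∫ RF dμ)/‖F‖_{∞,r}` on
`𝓜_r(𝕋^d × ℝ₊) × 𝓜(𝕋^d)`. -/
def pairNorm (r : ℝ) (ρ : SignedMeasure (Cyl d)) (μ : SignedMeasure (Td d)) : ℝ :=
  sSup {y : ℝ | ∃ (F : Cyl d → ℝ) (f : Td d → ℝ),
    MemBrC r F ∧ IsRecession r F f ∧ F ≠ 0 ∧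
    y = (sint ρ F + sint μ f) / wnorm r F}

/-! ### Riesz representation of bounded signed functionals -/

section SignedRiesz

set_option linter.unusedSectionVars false

variable {X : Type*} [TopologicalSpace X] [CompactSpace X]

/-- The positive part `f ↦ sup {Ψ h : 0 ≤ h ≤ f}` of a linear functional on `C(X)`,
meaningful for `f ≥ 0` and bounded `Ψ`. -/
def posFun (Ψ : C(X, ℝ) →ₗ[ℝ] ℝ) (f : C(X, ℝ)) : ℝ :=
  sSup {y : ℝ | ∃ h : C(X, ℝ), 0 ≤ h ∧ h ≤ f ∧ y = Ψ h}

variable {Ψ : C(X, ℝ) →ₗ[ℝ] ℝ} {C : ℝ}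

lemma norm_le_of_between {h f : C(X, ℝ)} (h0 : 0 ≤ h) (hf : h ≤ f) : ‖h‖ ≤ ‖f‖ := by
  rw [ContinuousMap.norm_le _ (norm_nonneg f)]
  intro x
  have h1 : 0 ≤ h x := h0 x
  have h2 : h x ≤ f x := hf x
  rw [Real.norm_of_nonneg h1]
  exact h2.trans ((le_abs_self _).trans (f.norm_coe_le_norm x))

lemma posFun_bddAbove (hb : ∀ g, |Ψ g| ≤ C * ‖g‖) (f : C(X, ℝ)) :
    BddAbove {y : ℝ | ∃ h : C(X, ℝ), 0 ≤ h ∧ h ≤ f ∧ y = Ψ h} := by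
  refine ⟨|C| * ‖f‖, ?_⟩
  rintro y ⟨h, h0, hf, rfl⟩
  calc Ψ h ≤ |Ψ h| := le_abs_self _
    _ ≤ C * ‖h‖ := hb h
    _ ≤ |C| * ‖h‖ := by gcongr; exact le_abs_self C
    _ ≤ |C| * ‖f‖ := by gcongr; exact norm_le_of_between h0 hf

lemma le_posFun (hb : ∀ g, |Ψ g| ≤ C * ‖g‖) {f h : C(X, ℝ)} (h0 : 0 ≤ h) (hf : h ≤ f) :
    Ψ h ≤ posFun Ψ f :=
  le_csSup (posFun_bddAbove hb f) ⟨h, h0, hf, rfl⟩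

lemma posFun_le {f : C(X, ℝ)} (hf : 0 ≤ f) {M : ℝ}
    (hM : ∀ h : C(X, ℝ), 0 ≤ h → h ≤ f → Ψ h ≤ M) : posFun Ψ f ≤ M := by
  refine csSup_le ⟨Ψ 0, ⟨0, le_rfl, hf, rfl⟩⟩ ?_
  rintro y ⟨h, h0, hf, rfl⟩
  exact hM h h0 hf

lemma posFun_nonneg (hb : ∀ g, |Ψ g| ≤ C * ‖g‖) {f : C(X, ℝ)} (hf : 0 ≤ f) :
    0 ≤ posFun Ψ f := by
  simpa using le_posFun hb (le_refl (0 : C(X, ℝ))) hf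

lemma posFun_add (hb : ∀ g, |Ψ g| ≤ C * ‖g‖) {f g : C(X, ℝ)} (hf : 0 ≤ f) (hg : 0 ≤ g) :
    posFun Ψ (f + g) = posFun Ψ f + posFun Ψ g := by
  apply le_antisymm
  · apply posFun_le (add_nonneg hf hg)
    intro h h0 hh
    -- Riesz decomposition: `h = min h f + (h - min h f)`.
    have e : Ψ h = Ψ (h ⊓ f) + Ψ (h - h ⊓ f) := by rw [← map_add]; congr 1; abel
    rw [e]
    apply add_le_add
    · exact le_posFun hb (le_inf h0 hf) inf_le_right
    · apply le_posFun hb (sub_nonneg.2 inf_le_left)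
      intro x
      have h1 : h x ≤ f x + g x := hh x
      have h2 : 0 ≤ g x := hg x
      change h x - min (h x) (f x) ≤ g x
      rcases le_total (h x) (f x) with h3 | h3
      · simp [h3, h2]
      · rw [min_eq_right h3]; linarith
  · rw [← le_sub_iff_add_le]
    apply posFun_le hf
    intro h h0 hh
    rw [le_sub_comm]
    apply posFun_le hg
    intro k k0 hk
    rw [le_sub_iff_add_le, ← map_add]
    exact le_posFun hb (add_nonneg k0 h0) (by rw [add_comm f g]; exact add_le_add hk hh)

lemma posFun_smul (hb : ∀ g, |Ψ g| ≤ C * ‖g‖) {f : C(X, ℝ)} (hf : 0 ≤ f) {c : ℝ} (hc : 0 ≤ c) :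
    posFun Ψ (c • f) = c * posFun Ψ f := by
  have key : ∀ {c : ℝ}, 0 ≤ c → ∀ {f : C(X, ℝ)}, 0 ≤ f → c * posFun Ψ f ≤ posFun Ψ (c • f) := by
    intro c hc f hf
    rcases hc.eq_or_lt with rfl | hc'
    · simpa using posFun_nonneg hb (le_refl (0 : C(X, ℝ)))
    rw [mul_comm, ← le_div_iff₀ hc']
    apply posFun_le hf
    intro h h0 hh
    rw [le_div_iff₀ hc', mul_comm, ← smul_eq_mul, ← map_smul]
    exact le_posFun hb (smul_nonneg hc h0) (smul_le_smul_of_nonneg_left hh hc)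
  apply le_antisymm _ (key hc hf)
  rcases hc.eq_or_lt with rfl | hc'
  · rw [zero_smul, zero_mul]
    apply posFun_le le_rfl
    intro h h0 hh
    rw [le_antisymm hh h0, map_zero]
  have := key (inv_nonneg.2 hc) (smul_nonneg hc hf)
  rw [smul_smul, inv_mul_cancel₀ hc'.ne', one_smul] at this
  rwa [inv_mul_le_iff₀ hc'] at this

/-- An `ℝ≥0`-valued compactly supported function, seen as a real continuous function. -/
def toRC (f : CompactlySupportedContinuousMap X ℝ≥0) : C(X, ℝ) :=
  ⟨fun x => (f x : ℝ), by fun_prop⟩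

lemma toRC_nonneg (f : CompactlySupportedContinuousMap X ℝ≥0) : 0 ≤ toRC f := fun x => (f x).2

/-- **Riesz representation for signed functionals**: a bounded linear functional on `C(X)`,
`X` compact Hausdorff, is a difference of two finite measures. -/
lemma signed_riesz [T2Space X] [MeasurableSpace X] [BorelSpace X]
    (Ψ : C(X, ℝ) →ₗ[ℝ] ℝ) (C : ℝ) (hb : ∀ g, |Ψ g| ≤ C * ‖g‖) :
    ∃ a b : Measure X, IsFiniteMeasure a ∧ IsFiniteMeasure b ∧
      ∀ g : C(X, ℝ), Ψ g = ∫ x, g x ∂a - ∫ x, g x ∂b := by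
  have hadd : ∀ f g : CompactlySupportedContinuousMap X ℝ≥0, toRC (f + g) = toRC f + toRC g := by
    intro f g; ext x; simp [toRC]
  have hsm : ∀ (c : ℝ≥0) (f : CompactlySupportedContinuousMap X ℝ≥0),
      toRC (c • f) = (c : ℝ) • toRC f := by
    intro c f; ext x; simp [toRC]
  let P : CompactlySupportedContinuousMap X ℝ≥0 →ₗ[ℝ≥0] ℝ≥0 :=
    { toFun := fun f => .mk (posFun Ψ (toRC f)) (posFun_nonneg hb (toRC_nonneg f))
      map_add' := fun f g => by
        apply NNReal.eq
        change posFun Ψ (toRC (f + g)) = posFun Ψ (toRC f) + posFun Ψ (toRC g)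
        rw [hadd, posFun_add hb (toRC_nonneg f) (toRC_nonneg g)]
      map_smul' := fun c f => by
        apply NNReal.eq
        change posFun Ψ (toRC (c • f)) = c * posFun Ψ (toRC f)
        rw [hsm, posFun_smul hb (toRC_nonneg f) c.coe_nonneg] }
  let N : CompactlySupportedContinuousMap X ℝ≥0 →ₗ[ℝ≥0] ℝ≥0 :=
    { toFun := fun f => .mk (posFun Ψ (toRC f) - Ψ (toRC f))
        (sub_nonneg.2 (le_posFun hb (toRC_nonneg f) le_rfl))
      map_add' := fun f g => by
        apply NNReal.eq
        change posFun Ψ (toRC (f + g)) - Ψ (toRC (f + g)) =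
          posFun Ψ (toRC f) - Ψ (toRC f) + (posFun Ψ (toRC g) - Ψ (toRC g))
        rw [hadd, posFun_add hb (toRC_nonneg f) (toRC_nonneg g), map_add]
        ring
      map_smul' := fun c f => by
        apply NNReal.eq
        change posFun Ψ (toRC (c • f)) - Ψ (toRC (c • f)) =
          c * (posFun Ψ (toRC f) - Ψ (toRC f))
        rw [hsm, posFun_smul hb (toRC_nonneg f) c.coe_nonneg, map_smul, smul_eq_mul]
        ring }
  refine ⟨NNRealRMK.rieszMeasure P, NNRealRMK.rieszMeasure N, inferInstance, inferInstance, ?_⟩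
  have hpos : ∀ f : CompactlySupportedContinuousMap X ℝ≥0,
      Ψ (toRC f) = ∫ x, toRC f x ∂(NNRealRMK.rieszMeasure P)
        - ∫ x, toRC f x ∂(NNRealRMK.rieszMeasure N) := by
    intro f
    have h1 := NNRealRMK.integral_rieszMeasure P f
    have h2 := NNRealRMK.integral_rieszMeasure N f
    have h3 : (P f : ℝ) = posFun Ψ (toRC f) := rfl
    have h4 : (N f : ℝ) = posFun Ψ (toRC f) - Ψ (toRC f) := rfl
    change _ = ∫ x, (f x : ℝ) ∂_ - ∫ x, (f x : ℝ) ∂_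
    rw [h1, h2, h3, h4]; ring
  intro g
  let gp : CompactlySupportedContinuousMap X ℝ≥0 :=
    ⟨⟨fun x => (g x).toNNReal, by fun_prop⟩, HasCompactSupport.of_compactSpace _⟩
  let gm : CompactlySupportedContinuousMap X ℝ≥0 :=
    ⟨⟨fun x => (-g x).toNNReal, by fun_prop⟩, HasCompactSupport.of_compactSpace _⟩
  have hg : g = toRC gp - toRC gm := by
    ext x
    change g x = ((g x).toNNReal : ℝ) - ((-g x).toNNReal : ℝ)
    simp
  have hint : ∀ (m : Measure X) [IsFiniteMeasure m] (k : C(X, ℝ)), Integrable k m := fun m _ k =>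
    k.continuous.integrable_of_hasCompactSupport (HasCompactSupport.of_compactSpace _)
  have hsub : ∀ (m : Measure X) [IsFiniteMeasure m],
      ∫ x, g x ∂m = ∫ x, toRC gp x ∂m - ∫ x, toRC gm x ∂m := by
    intro m _
    rw [← integral_sub (hint m _) (hint m _)]
    congr 1
    ext x
    conv_lhs => rw [hg]
    rfl
  rw [hsub, hsub]
  conv_lhs => rw [hg, map_sub, hpos, hpos]
  ring

end SignedRiesz

/-! ### Integration against signed measures -/

section Signed

variable {α : Type*} [MeasurableSpace α]

lemma totalVariation_eq (s : SignedMeasure α) : s.totalVariation =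
    s.toJordanDecomposition.posPart + s.toJordanDecomposition.negPart := rfl

instance (s : SignedMeasure α) : IsFiniteMeasure s.totalVariation := by
  rw [totalVariation_eq]; infer_instance

lemma integrable_parts {s : SignedMeasure α} {F : α → ℝ} (hF : Integrable F s.totalVariation) :
    Integrable F s.toJordanDecomposition.posPart ∧
      Integrable F s.toJordanDecomposition.negPart := by
  rw [totalVariation_eq] at hF
  exact ⟨hF.left_of_add_measure, hF.right_of_add_measure⟩

lemma abs_sint_le {s : SignedMeasure α} {F : α → ℝ} (hF : Integrable F s.totalVariation) :
    |sint s F| ≤ ∫ x, |F x| ∂s.totalVariation := by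
  obtain ⟨h1, h2⟩ := integrable_parts hF
  rw [totalVariation_eq, integral_add_measure h1.abs h2.abs]
  exact (abs_sub _ _).trans (add_le_add (abs_integral_le_integral_abs) (abs_integral_le_integral_abs))

/-- The Jordan parts of `a - b` are the truncated differences of `a` and `b`, hence at most `a` and
`b` respectively. -/
lemma totalVariation_sub_le (a b : Measure α) [IsFiniteMeasure a] [IsFiniteMeasure b] :
    (a.toSignedMeasure - b.toSignedMeasure).totalVariation ≤ a + b := by
  have h : (a.toSignedMeasure - b.toSignedMeasure).toJordanDecomposition =
      Measure.jordanDecompositionOfToSignedMeasureSub a b :=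
    SignedMeasure.toJordanDecomposition_eq
      (Measure.jordanDecompositionOfToSignedMeasureSub_toSignedMeasure).symm
  rw [totalVariation_eq, h]
  exact add_le_add Measure.sub_le Measure.sub_le

/-- `sint` can be computed from any representation as a difference of finite measures. -/
lemma sint_sub (a b : Measure α) [IsFiniteMeasure a] [IsFiniteMeasure b] {F : α → ℝ}
    (ha : Integrable F a) (hb : Integrable F b) :
    sint (a.toSignedMeasure - b.toSignedMeasure) F = ∫ x, F x ∂a - ∫ x, F x ∂b := by
  set s := a.toSignedMeasure - b.toSignedMeasure with hs
  have hF : Integrable F s.totalVariation :=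
    (ha.add_measure hb).mono_measure (totalVariation_sub_le a b)
  obtain ⟨h1, h2⟩ := integrable_parts hF
  have h3 := s.toSignedMeasure_toJordanDecomposition
  have h4 : s.toJordanDecomposition.posPart + b = a + s.toJordanDecomposition.negPart := by
    rw [← Measure.toSignedMeasure_eq_toSignedMeasure_iff, Measure.toSignedMeasure_add,
      Measure.toSignedMeasure_add]
    rw [JordanDecomposition.toSignedMeasure, hs, sub_eq_sub_iff_add_eq_add] at h3
    exact h3
  have h5 := integral_add_measure h1 hb
  rw [h4, integral_add_measure ha h2] at h5
  unfold sint
  linarith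

lemma eq_posPart_sub_negPart (s : SignedMeasure α) :
    s = s.toJordanDecomposition.posPart.toSignedMeasure -
      s.toJordanDecomposition.negPart.toSignedMeasure :=
  s.toSignedMeasure_toJordanDecomposition.symm

lemma sub_eq_sub_parts (s t : SignedMeasure α) : s - t =
    (s.toJordanDecomposition.posPart + t.toJordanDecomposition.negPart).toSignedMeasure -
      (s.toJordanDecomposition.negPart + t.toJordanDecomposition.posPart).toSignedMeasure := by
  rw [Measure.toSignedMeasure_add, Measure.toSignedMeasure_add]
  conv_lhs => rw [eq_posPart_sub_negPart s, eq_posPart_sub_negPart t]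
  abel

lemma totalVariation_sub_signed_le (s t : SignedMeasure α) :
    (s - t).totalVariation ≤ s.totalVariation + t.totalVariation := by
  rw [sub_eq_sub_parts]
  refine (totalVariation_sub_le _ _).trans (le_of_eq ?_)
  rw [totalVariation_eq, totalVariation_eq]
  abel

lemma sint_sub_signed {s t : SignedMeasure α} {F : α → ℝ}
    (hs : Integrable F s.totalVariation) (ht : Integrable F t.totalVariation) :
    sint (s - t) F = sint s F - sint t F := by
  obtain ⟨h1, h2⟩ := integrable_parts hs
  obtain ⟨h3, h4⟩ := integrable_parts ht
  rw [sub_eq_sub_parts, sint_sub _ _ (h1.add_measure h4) (h2.add_measure h3),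
    integral_add_measure h1 h4, integral_add_measure h2 h3]
  unfold sint
  ring

/-- A measurable sign function of a signed measure `s`: `σ` is `1` a.e. for the positive part and
`-1` a.e. for the negative part. -/
lemma exists_sign (s : SignedMeasure α) : ∃ σ : α → ℝ, Measurable σ ∧ (∀ x, |σ x| ≤ 1) ∧
    (∀ᵐ x ∂s.toJordanDecomposition.posPart, σ x = 1) ∧
    (∀ᵐ x ∂s.toJordanDecomposition.negPart, σ x = -1) := by
  classical
  obtain ⟨A, hA, h1, h2⟩ := s.toJordanDecomposition.mutuallySingular
  refine ⟨fun x => if x ∈ A then -1 else 1, Measurable.ite hA measurable_const measurable_const,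
    fun x => by dsimp only; split_ifs <;> simp, ?_, ?_⟩
  · filter_upwards [measure_eq_zero_iff_ae_notMem.1 h1] with x hx
    simp [hx]
  · filter_upwards [measure_eq_zero_iff_ae_notMem.1 h2] with x hx
    simp at hx
    simp [hx]

/-- If `F` is close to `w σ` with `σ` the sign of `s`, then `∫ F ds` is close to `∫ w d|s|`. -/
lemma integral_weight_sub_sint_le {s : SignedMeasure α} {σ F w : α → ℝ}
    (hw : Integrable w s.totalVariation) (hF : Integrable F s.totalVariation)
    (hσm : Measurable σ) (hσ : ∀ x, |σ x| ≤ 1)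
    (hp : ∀ᵐ x ∂s.toJordanDecomposition.posPart, σ x = 1)
    (hn : ∀ᵐ x ∂s.toJordanDecomposition.negPart, σ x = -1) :
    ∫ x, w x ∂s.totalVariation - sint s F ≤ ∫ x, |F x - w x * σ x| ∂s.totalVariation := by
  have hwσ : Integrable (fun x => w x * σ x) s.totalVariation :=
    hw.mul_bdd (c := 1) hσm.aestronglyMeasurable (Eventually.of_forall hσ)
  have hd : Integrable (fun x => |F x - w x * σ x|) s.totalVariation := (hF.sub hwσ).abs
  obtain ⟨w1, w2⟩ := integrable_parts hw
  obtain ⟨f1, f2⟩ := integrable_parts hF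
  obtain ⟨d1, d2⟩ := integrable_parts hd
  have e1 : ∫ x, w x ∂s.toJordanDecomposition.posPart - ∫ x, F x ∂s.toJordanDecomposition.posPart
      ≤ ∫ x, |F x - w x * σ x| ∂s.toJordanDecomposition.posPart := by
    rw [← integral_sub w1 f1]
    apply integral_mono_ae (w1.sub f1) d1
    filter_upwards [hp] with x hx
    simp only [Pi.sub_apply, hx, mul_one]
    rw [abs_sub_comm]; exact le_abs_self _
  have e2 : ∫ x, w x ∂s.toJordanDecomposition.negPart + ∫ x, F x ∂s.toJordanDecomposition.negPart
      ≤ ∫ x, |F x - w x * σ x| ∂s.toJordanDecomposition.negPart := by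
    rw [← integral_add w2 f2]
    apply integral_mono_ae (w2.add f2) d2
    filter_upwards [hn] with x hx
    simp only [Pi.add_apply, hx]
    refine le_trans (le_of_eq ?_) (le_abs_self _)
    ring
  rw [totalVariation_eq, integral_add_measure w1 w2, integral_add_measure d1 d2]
  unfold sint
  linarith

end Signed

/-! ### The compactified cylinder -/

section Compactification

/-- The compactification `𝕋^d × [0,1]` of the cylinder; the boundary `t = 1` plays the role of
`λ = ∞`. -/
abbrev Comp (d : ℕ) : Type := Td d × unitInterval

/-- The weight `1 + λ^r`. -/
def wt (r : ℝ) (p : Cyl d) : ℝ := 1 + (p.2 : ℝ) ^ r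

/-- The embedding `(u, λ) ↦ (u, λ/(1+λ))` of the cylinder into its compactification. -/
def emb (p : Cyl d) : Comp d :=
  (p.1, ⟨(p.2 : ℝ) / (1 + p.2), by
    have := p.2.coe_nonneg
    constructor
    · positivity
    · rw [div_le_one (by positivity)]; linarith⟩)

/-- The inverse `(u, t) ↦ (u, t/(1-t))` of `emb`, with a junk value on the boundary `t = 1`. -/
def embInv (k : Comp d) : Cyl d := (k.1, ((k.2 : ℝ) / (1 - k.2)).toNNReal)

/-- The boundary inclusion `u ↦ (u, 1)`. -/
def bdy (u : Td d) : Comp d := (u, 1)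

/-- The function `(1+λ^r) g(u, λ/(1+λ))` on the cylinder associated to `g ∈ C(𝕋^d × [0,1])`. -/
def lift (r : ℝ) (g : Comp d → ℝ) (p : Cyl d) : ℝ := wt r p * g (emb p)

lemma wt_ge_one (r : ℝ) (p : Cyl d) : 1 ≤ wt r p := by
  have : 0 ≤ (p.2 : ℝ) ^ r := Real.rpow_nonneg p.2.coe_nonneg r
  unfold wt; linarith

lemma wt_pos (r : ℝ) (p : Cyl d) : 0 < wt r p := lt_of_lt_of_le one_pos (wt_ge_one r p)

lemma continuous_wt {r : ℝ} (hr : 0 < r) : Continuous (wt r : Cyl d → ℝ) := by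
  unfold wt
  exact continuous_const.add ((NNReal.continuous_coe.comp continuous_snd).rpow_const
    fun _ => Or.inr hr.le)

lemma continuous_emb : Continuous (emb : Cyl d → Comp d) := by
  refine continuous_fst.prodMk (Continuous.subtype_mk ?_ _)
  have h : Continuous fun p : Cyl d => (p.2 : ℝ) := NNReal.continuous_coe.comp continuous_snd
  refine h.div (continuous_const.add h) fun p => ?_
  have := p.2.coe_nonneg
  positivity

lemma continuous_bdy : Continuous (bdy : Td d → Comp d) := continuous_id.prodMk continuous_const

lemma emb_ne_one (p : Cyl d) : (emb p).2 ≠ 1 := by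
  intro h
  have h1 : (p.2 : ℝ) / (1 + p.2) = 1 := congrArg Subtype.val h
  have := p.2.coe_nonneg
  rw [div_eq_one_iff_eq (by positivity)] at h1
  linarith

lemma lt_one_of_ne {t : unitInterval} (h : t ≠ 1) : (t : ℝ) < 1 :=
  lt_of_le_of_ne t.2.2 fun e => h (Subtype.ext e)

lemma embInv_emb (p : Cyl d) : embInv (emb p) = p := by
  have := p.2.coe_nonneg
  refine Prod.ext rfl ?_
  apply NNReal.eq
  change ((((p.2 : ℝ) / (1 + p.2)) / (1 - (p.2 : ℝ) / (1 + p.2))).toNNReal : ℝ) = p.2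
  have h : ((p.2 : ℝ) / (1 + p.2)) / (1 - (p.2 : ℝ) / (1 + p.2)) = p.2 := by
    have : (1 + (p.2 : ℝ)) ≠ 0 := by positivity
    field_simp
    simp
  rw [h, Real.coe_toNNReal _ this]

lemma coe_embInv_snd (k : Comp d) : ((embInv k).2 : ℝ) = (k.2 : ℝ) / (1 - k.2) :=
  Real.coe_toNNReal _ (div_nonneg k.2.2.1 (sub_nonneg.2 k.2.2.2))

lemma emb_embInv {k : Comp d} (h : k.2 ≠ 1) : emb (embInv k) = k := by
  refine Prod.ext rfl (Subtype.ext ?_)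
  change ((embInv k).2 : ℝ) / (1 + ((embInv k).2 : ℝ)) = k.2
  rw [coe_embInv_snd]
  have h1 := lt_one_of_ne h
  have h2 : (1 : ℝ) - k.2 ≠ 0 := by linarith
  have h3 : 1 + (k.2 : ℝ) / (1 - k.2) = 1 / (1 - k.2) := by field_simp; ring
  rw [h3]
  field_simp

lemma measurable_embInv : Measurable (embInv : Comp d → Cyl d) := by
  unfold embInv
  fun_prop

lemma continuousAt_embInv {k : Comp d} (h : k.2 ≠ 1) : ContinuousAt embInv k := by
  have h1 := lt_one_of_ne h
  have h2 : (1 : ℝ) - k.2 ≠ 0 := by linarith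
  unfold embInv
  refine continuousAt_fst.prodMk ?_
  refine ContinuousAt.comp (g := Real.toNNReal) continuous_real_toNNReal.continuousAt ?_
  refine ContinuousAt.div ?_ ?_ h2
  · fun_prop
  · fun_prop

lemma lift_div_wt (r : ℝ) (g : Comp d → ℝ) (p : Cyl d) :
    lift r g p / (1 + (p.2 : ℝ) ^ r) = g (emb p) := by
  change wt r p * g (emb p) / wt r p = _
  rw [mul_div_cancel_left₀ _ (wt_pos r p).ne']

lemma lift_continuous {r : ℝ} (hr : 0 < r) (g : C(Comp d, ℝ)) : Continuous (lift r g) :=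
  (continuous_wt hr).mul (g.continuous.comp continuous_emb)

lemma lift_abs_le (r : ℝ) {g : Comp d → ℝ} {C : ℝ} (hg : ∀ k, |g k| ≤ C) (p : Cyl d) :
    |lift r g p| ≤ C * wt r p := by
  rw [lift, abs_mul, abs_of_pos (wt_pos r p), mul_comm]
  exact mul_le_mul_of_nonneg_right (hg _) (wt_pos r p).le

lemma lift_memBrC {r : ℝ} (hr : 0 < r) (g : C(Comp d, ℝ)) : MemBrC r (lift r g) :=
  ⟨lift_continuous hr g, ‖g‖, lift_abs_le r fun k => g.norm_coe_le_norm k⟩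

lemma tendsto_emb (u : Td d) :
    Tendsto (fun lam : ℝ≥0 => emb (u, lam)) atTop (𝓝 (bdy u)) := by
  refine tendsto_const_nhds.prodMk_nhds ?_
  rw [tendsto_subtype_rng]
  change Tendsto (fun lam : ℝ≥0 => (lam : ℝ) / (1 + lam)) atTop (𝓝 1)
  have h : ∀ lam : ℝ≥0, (lam : ℝ) / (1 + lam) = 1 - (1 + (lam : ℝ))⁻¹ := by
    intro lam
    have := lam.coe_nonneg
    have : 1 + (lam : ℝ) ≠ 0 := by positivity
    field_simp
    ring
  simp_rw [h]
  have h2 : Tendsto (fun lam : ℝ≥0 => (1 + (lam : ℝ))⁻¹) atTop (𝓝 0) :=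
    tendsto_inv_atTop_zero.comp
      (tendsto_atTop_add_const_left _ _ (NNReal.tendsto_coe_atTop.2 tendsto_id))
  simpa using h2.const_sub 1

lemma lift_isRecession {r : ℝ} (g : C(Comp d, ℝ)) :
    IsRecession r (lift r g) (fun u => g (bdy u)) := by
  refine ⟨g.continuous.comp continuous_bdy, ?_⟩
  have h : ∀ (lam : ℝ≥0) (u : Td d),
      lift r g (u, lam) / (1 + (lam : ℝ) ^ r) = g (emb (u, lam)) :=
    fun lam u => lift_div_wt r g (u, lam)
  simp_rw [h]
  have huc := CompactSpace.uniformContinuous_of_continuous g.continuous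
  rw [Metric.tendsto_nhds]
  intro ε hε
  obtain ⟨δ, hδ, H⟩ := Metric.uniformContinuous_iff.1 huc (ε / 2) (half_pos hε)
  have ht := (tendsto_emb (0 : Td d)).eventually (Metric.ball_mem_nhds _ hδ)
  filter_upwards [ht] with lam hlam
  have hle : (⨆ u : Td d, |g (emb (u, lam)) - g (bdy u)|) ≤ ε / 2 := by
    apply ciSup_le
    intro u
    refine (H ?_).le
    rw [Prod.dist_eq] at hlam ⊢
    have h2 := lt_of_le_of_lt (le_max_right _ _) hlam
    refine max_lt ?_ h2
    change dist u u < δ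
    rw [dist_self]; exact hδ
  have h0 : 0 ≤ (⨆ u : Td d, |g (emb (u, lam)) - g (bdy u)|) :=
    Real.iSup_nonneg fun u => abs_nonneg _
  rw [Real.dist_0_eq_abs, abs_of_nonneg h0]
  linarith

/-- Every element of `C̄_r`, together with its recession function, comes from a continuous
function on the compactification. -/
lemma exists_lift {r : ℝ} (hr : 0 < r) {F : Cyl d → ℝ} {f : Td d → ℝ} (hF : MemBrC r F)
    (hf : IsRecession r F f) :
    ∃ g : C(Comp d, ℝ), F = lift r g ∧ f = fun u => g (bdy u) := by
  classical
  obtain ⟨hFc, -⟩ := hF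
  obtain ⟨hfc, hlim⟩ := hf
  have hQc : Continuous fun p : Cyl d => F p / wt r p :=
    hFc.div (continuous_wt hr) fun p => (wt_pos r p).ne'
  let g : Comp d → ℝ := fun k => if k.2 = 1 then f k.1 else F (embInv k) / wt r (embInv k)
  have hg : Continuous g := by
    rw [continuous_iff_continuousAt]
    intro k
    by_cases hk : k.2 = 1
    · rw [ContinuousAt, Metric.tendsto_nhds]
      intro ε hε
      have e1 := (Metric.tendsto_nhds.1 hlim) (ε / 2) (half_pos hε)
      obtain ⟨N, hN⟩ := eventually_atTop.1 e1
      have e2 : ∀ᶠ k' in 𝓝 k, |f k'.1 - f k.1| < ε / 2 :=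
        (Metric.tendsto_nhds.1 (hfc.comp continuous_fst).continuousAt) (ε / 2) (half_pos hε)
      have e3 : ∀ᶠ k' : Comp d in 𝓝 k, (N : ℝ) / (1 + N) < k'.2 := by
        have hc : Continuous fun k' : Comp d => (k'.2 : ℝ) := by fun_prop
        refine hc.continuousAt.eventually_const_lt ?_
        have := N.coe_nonneg
        dsimp only
        rw [hk, div_lt_iff₀ (by positivity)]
        simp
      filter_upwards [e2, e3] with k' h2 h3
      have hgk : g k = f k.1 := if_pos hk
      rw [hgk, Real.dist_eq]
      by_cases hk' : k'.2 = 1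
      · have : g k' = f k'.1 := if_pos hk'
        rw [this]; linarith
      · have hgk' : g k' = F (embInv k') / wt r (embInv k') := if_neg hk'
        have hl : N ≤ (embInv k').2 := by
          rw [← NNReal.coe_le_coe, coe_embInv_snd]
          have h1 := lt_one_of_ne hk'
          have := N.coe_nonneg
          rw [div_lt_iff₀ (by positivity)] at h3
          rw [le_div_iff₀ (by linarith)]
          nlinarith
        have h4 := hN _ hl
        have hbdd : BddAbove (Set.range fun u : Td d =>
            |F (u, (embInv k').2) / (1 + ((embInv k').2 : ℝ) ^ r) - f u|) := by
          refine (isCompact_range ?_).bddAbove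
          refine Continuous.abs (Continuous.sub (Continuous.div_const ?_ _) hfc)
          exact hFc.comp (continuous_id.prodMk continuous_const)
        have h5 := le_ciSup hbdd k'.1
        rw [Real.dist_0_eq_abs] at h4
        have h6 := lt_of_le_of_lt (h5.trans (le_abs_self _)) h4
        change |F (embInv k') / wt r (embInv k') - f k'.1| < ε / 2 at h6
        rw [hgk']
        calc _ ≤ |F (embInv k') / wt r (embInv k') - f k'.1| + |f k'.1 - f k.1| :=
              abs_sub_le _ _ _
          _ < ε := by linarith
    · have : g =ᶠ[𝓝 k] fun k => F (embInv k) / wt r (embInv k) := by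
        have ho : IsOpen {k' : Comp d | k'.2 ≠ 1} :=
          isOpen_ne_fun continuous_snd continuous_const
        filter_upwards [ho.mem_nhds hk] with k' hk'
        exact if_neg hk'
      refine ContinuousAt.congr ?_ this.symm
      exact ContinuousAt.comp (g := fun p : Cyl d => F p / wt r p) hQc.continuousAt
        (continuousAt_embInv hk)
  refine ⟨⟨g, hg⟩, ?_, ?_⟩
  · ext p
    change F p = wt r p * g (emb p)
    have : g (emb p) = F (embInv (emb p)) / wt r (embInv (emb p)) := if_neg (emb_ne_one p)
    rw [this, embInv_emb, mul_div_cancel₀ _ (wt_pos r p).ne']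
  · ext u
    exact (if_pos rfl).symm

lemma wnorm_lift_bddAbove (r : ℝ) (g : C(Comp d, ℝ)) :
    BddAbove (Set.range fun p : Cyl d => |lift r g p| / (1 + (p.2 : ℝ) ^ r)) := by
  refine ⟨‖g‖, ?_⟩
  rintro _ ⟨p, rfl⟩
  change |lift r g p| / wt r p ≤ _
  rw [div_le_iff₀ (wt_pos r p)]
  exact lift_abs_le r (fun k => g.norm_coe_le_norm k) p

lemma wnorm_nonneg (r : ℝ) (F : Cyl d → ℝ) : 0 ≤ wnorm r F :=
  Real.iSup_nonneg fun p => div_nonneg (abs_nonneg _) (wt_pos r p).le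

lemma wnorm_lift_le (r : ℝ) {g : Comp d → ℝ} {C : ℝ} (hg : ∀ k, |g k| ≤ C) :
    wnorm r (lift r g) ≤ C := by
  apply ciSup_le
  intro p
  change |lift r g p| / wt r p ≤ _
  rw [div_le_iff₀ (wt_pos r p)]
  exact lift_abs_le r hg p

lemma abs_emb_le_wnorm (r : ℝ) (g : C(Comp d, ℝ)) (p : Cyl d) :
    |g (emb p)| ≤ wnorm r (lift r g) := by
  have h := le_ciSup (wnorm_lift_bddAbove r g) p
  refine le_trans (le_of_eq ?_) h
  change _ = |lift r g p| / wt r p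
  rw [lift, abs_mul, abs_of_pos (wt_pos r p), mul_div_cancel_left₀ _ (wt_pos r p).ne']

lemma abs_lift_le_wnorm (r : ℝ) (g : C(Comp d, ℝ)) (p : Cyl d) :
    |lift r g p| ≤ wnorm r (lift r g) * wt r p := by
  rw [lift, abs_mul, abs_of_pos (wt_pos r p), mul_comm]
  exact mul_le_mul_of_nonneg_right (abs_emb_le_wnorm r g p) (wt_pos r p).le

lemma abs_bdy_le_wnorm (r : ℝ) (g : C(Comp d, ℝ)) (u : Td d) :
    |g (bdy u)| ≤ wnorm r (lift r g) := by
  have h : Tendsto (fun lam : ℝ≥0 => |g (emb (u, lam))|) atTop (𝓝 |g (bdy u)|) :=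
    ((g.continuous.tendsto _).comp (tendsto_emb u)).abs
  exact le_of_tendsto h (Eventually.of_forall fun lam => abs_emb_le_wnorm r g _)

end Compactification

/-! ### Pairs of measures as functionals -/

section Pairs

variable {r : ℝ}

lemma memMr_iff (hr : 0 < r) (ρ : SignedMeasure (Cyl d)) :
    MemMr r ρ ↔ Integrable (wt r) ρ.totalVariation := by
  have hm : Continuous fun p : Cyl d => (p.2 : ℝ) ^ r :=
    (NNReal.continuous_coe.comp continuous_snd).rpow_const fun _ => Or.inr hr.le
  have h0 : ∀ p : Cyl d, 0 ≤ (p.2 : ℝ) ^ r := fun p => Real.rpow_nonneg p.2.coe_nonneg r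
  have h1 : MemMr r ρ ↔ Integrable (fun p : Cyl d => (p.2 : ℝ) ^ r) ρ.totalVariation := by
    rw [MemMr, lt_top_iff_ne_top, lintegral_ofReal_ne_top_iff_integrable
      hm.aestronglyMeasurable (Eventually.of_forall h0)]
  rw [h1]
  constructor
  · intro h
    exact (integrable_const (1 : ℝ)).add h
  · intro h
    refine (h.sub (integrable_const (1 : ℝ))).congr (Eventually.of_forall fun p => ?_)
    simp [wt]

lemma tvr_eq (hr : 0 < r) (ρ : SignedMeasure (Cyl d)) :
    tvr r ρ = ∫ p, wt r p ∂ρ.totalVariation := by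
  rw [integral_eq_lintegral_of_nonneg_ae (Eventually.of_forall fun p => (wt_pos r p).le)
    (continuous_wt hr).aestronglyMeasurable]
  rfl

lemma tvT_eq (μ : SignedMeasure (Td d)) : tvT μ = ∫ _, (1 : ℝ) ∂μ.totalVariation := by
  simp [tvT, measureReal_def]

lemma integrable_lift (hr : 0 < r) {m : Measure (Cyl d)} (h : Integrable (wt r) m)
    (g : C(Comp d, ℝ)) : Integrable (lift r g) m := by
  refine (h.const_mul ‖g‖).mono' (lift_continuous hr g).aestronglyMeasurable
    (Eventually.of_forall fun p => ?_)
  exact lift_abs_le r (fun k => g.norm_coe_le_norm k) p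

lemma integrable_bdy (m : Measure (Td d)) [IsFiniteMeasure m]
    (g : C(Comp d, ℝ)) : Integrable (fun u => g (bdy u)) m :=
  (g.continuous.comp continuous_bdy).integrable_of_hasCompactSupport
    (HasCompactSupport.of_compactSpace _)

lemma pairing_le (hr : 0 < r) {ρ : SignedMeasure (Cyl d)} (μ : SignedMeasure (Td d))
    (hρ : MemMr r ρ) (g : C(Comp d, ℝ)) :
    |sint ρ (lift r g) + sint μ (fun u => g (bdy u))| ≤
      (tvr r ρ + tvT μ) * wnorm r (lift r g) := by
  have hw := (memMr_iff hr ρ).1 hρ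
  have hl := integrable_lift hr hw g
  have hb := integrable_bdy μ.totalVariation g
  have h1 : ∫ p, |lift r g p| ∂ρ.totalVariation ≤ wnorm r (lift r g) * tvr r ρ := by
    rw [tvr_eq hr, ← integral_const_mul]
    exact integral_mono hl.abs (hw.const_mul _) (abs_lift_le_wnorm r g)
  have h2 : ∫ u, |g (bdy u)| ∂μ.totalVariation ≤ wnorm r (lift r g) * tvT μ := by
    rw [tvT_eq, ← integral_const_mul]
    refine integral_mono hb.abs (integrable_const _) fun u => ?_
    simpa using abs_bdy_le_wnorm r g u
  have h3 := abs_sint_le hl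
  have h4 := abs_sint_le hb
  have h5 := abs_add_le (sint ρ (lift r g)) (sint μ (fun u => g (bdy u)))
  linarith

/-- The norm `‖ρ‖_{TV,r} + ‖μ‖_{TV}` is almost attained on the unit ball of `C(𝕋^d × [0,1])`:
the signs of `ρ` and `μ` glue to one measurable function on the compactification, which is
approximated in `L¹` by continuous functions. -/
lemma exists_almost_norming (hr : 0 < r) {ρ : SignedMeasure (Cyl d)} (μ : SignedMeasure (Td d))
    (hρ : MemMr r ρ) {ε : ℝ} (hε : 0 < ε) :
    ∃ g : C(Comp d, ℝ), (∀ k, |g k| ≤ 1) ∧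
      tvr r ρ + tvT μ - ε ≤ sint ρ (lift r g) + sint μ (fun u => g (bdy u)) := by
  classical
  have hw := (memMr_iff hr ρ).1 hρ
  obtain ⟨σ, hσm, hσ, hσp, hσn⟩ := exists_sign ρ
  obtain ⟨τ, hτm, hτ, hτp, hτn⟩ := exists_sign μ
  let S : Comp d → ℝ := fun k => if k.2 = 1 then τ k.1 else σ (embInv k)
  have hSm : Measurable S :=
    Measurable.ite (measurable_snd (measurableSet_singleton 1)) (hτm.comp measurable_fst)
      (hσm.comp measurable_embInv)
  have hS : ∀ k, |S k| ≤ 1 := by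
    intro k
    by_cases h : k.2 = 1
    · have : S k = τ k.1 := if_pos h
      rw [this]; exact hτ _
    · have : S k = σ (embInv k) := if_neg h
      rw [this]; exact hσ _
  have hSe : ∀ p : Cyl d, S (emb p) = σ p := by
    intro p
    have : S (emb p) = σ (embInv (emb p)) := if_neg (emb_ne_one p)
    rw [this, embInv_emb]
  have hSb : ∀ u : Td d, S (bdy u) = τ u := fun u => if_pos rfl
  have hwm : Measurable fun p : Cyl d => ENNReal.ofReal (wt r p) :=
    (continuous_wt hr).measurable.ennreal_ofReal
  have : IsFiniteMeasure (ρ.totalVariation.withDensity fun p => ENNReal.ofReal (wt r p)) :=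
    isFiniteMeasure_withDensity_ofReal hw.2
  let m1 : Measure (Comp d) :=
    (ρ.totalVariation.withDensity fun p => ENNReal.ofReal (wt r p)).map emb
  let m2 : Measure (Comp d) := μ.totalVariation.map bdy
  have hSi : ∀ m : Measure (Comp d), IsFiniteMeasure m → Integrable S m := fun m _ =>
    Integrable.of_bound hSm.aestronglyMeasurable 1 (Eventually.of_forall hS)
  obtain ⟨g0, hg0, hg0i⟩ :=
    (hSi (m1 + m2) inferInstance).exists_boundedContinuous_integral_sub_le hε
  -- Truncating to `[-1, 1]` does not increase the distance to `S`.
  let g : C(Comp d, ℝ) := ⟨fun k => max (-1) (min 1 (g0 k)), by fun_prop⟩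
  have hg1 : ∀ k, |g k| ≤ 1 := fun k =>
    abs_le.2 ⟨le_max_left _ _, max_le (by norm_num) (min_le_left _ _)⟩
  have hgS : ∀ k, |g k - S k| ≤ ‖S k - g0 k‖ := by
    intro k
    have hs := abs_le.1 (hS k)
    rw [Real.norm_eq_abs, abs_sub_comm (S k)]
    have e : S k = max (-1) (min 1 (S k)) := by
      rw [min_eq_right hs.2, max_eq_right hs.1]
    change |max (-1) (min 1 (g0 k)) - S k| ≤ _
    conv_lhs => rw [e]
    exact (abs_max_sub_max_le_max _ _ _ _).trans (max_le (by simp)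
      ((abs_min_sub_min_le_max _ _ _ _).trans (max_le (by simp) le_rfl)))
  refine ⟨g, hg1, ?_⟩
  have hgi : ∀ m : Measure (Comp d), IsFiniteMeasure m → Integrable (fun k => |g k - S k|) m :=
    fun m hm => (Integrable.sub (Integrable.of_bound g.continuous.aestronglyMeasurable 1
      (Eventually.of_forall hg1)) (hSi m hm)).abs
  have hdm : Measurable fun k => |g k - S k| := (g.continuous.measurable.sub hSm).abs
  have htot : ∫ k, |g k - S k| ∂m1 + ∫ k, |g k - S k| ∂m2 ≤ ε := by
    rw [← integral_add_measure (hgi m1 inferInstance) (hgi m2 inferInstance)]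
    refine (integral_mono (hgi _ inferInstance) ?_ hgS).trans hg0
    exact ((hSi _ inferInstance).sub hg0i).norm
  have hm1 : ∫ k, |g k - S k| ∂m1 = ∫ p, |lift r g p - wt r p * σ p| ∂ρ.totalVariation := by
    rw [integral_map continuous_emb.aemeasurable hdm.aestronglyMeasurable,
      integral_withDensity_eq_integral_toReal_smul hwm (by simp)]
    congr 1
    ext p
    rw [ENNReal.toReal_ofReal (wt_pos r p).le, hSe, lift, ← mul_sub, abs_mul,
      abs_of_pos (wt_pos r p), smul_eq_mul]
  have hm2 : ∫ k, |g k - S k| ∂m2 = ∫ u, |g (bdy u) - 1 * τ u| ∂μ.totalVariation := by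
    rw [integral_map continuous_bdy.aemeasurable hdm.aestronglyMeasurable]
    simp_rw [hSb, one_mul]
  have k1 := integral_weight_sub_sint_le hw (integrable_lift hr hw g) hσm hσ hσp hσn
  have k2 := integral_weight_sub_sint_le (integrable_const (1 : ℝ))
    (integrable_bdy μ.totalVariation g) hτm hτ hτp hτn
  rw [← hm1, ← tvr_eq hr] at k1
  rw [← hm2, ← tvT_eq] at k2
  linarith

lemma quotient_le (hr : 0 < r) {ρ : SignedMeasure (Cyl d)} (μ : SignedMeasure (Td d))
    (hρ : MemMr r ρ) : ∀ y ∈ {y : ℝ | ∃ (F : Cyl d → ℝ) (f : Td d → ℝ),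
      MemBrC r F ∧ IsRecession r F f ∧ F ≠ 0 ∧ y = (sint ρ F + sint μ f) / wnorm r F},
      y ≤ tvr r ρ + tvT μ := by
  rintro y ⟨F, f, hF, hf, -, rfl⟩
  obtain ⟨g, rfl, rfl⟩ := exists_lift hr hF hf
  have h0 : 0 ≤ tvr r ρ + tvT μ := add_nonneg ENNReal.toReal_nonneg ENNReal.toReal_nonneg
  exact div_le_of_le_mul₀ (wnorm_nonneg _ _) h0 ((le_abs_self _).trans (pairing_le hr μ hρ g))

lemma pairNorm_nonneg (hr : 0 < r) (ρ : SignedMeasure (Cyl d)) (μ : SignedMeasure (Td d)) :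
    0 ≤ pairNorm r ρ μ := by
  -- One of the constant functions `1` and `-1` on the compactification has a nonnegative pairing.
  have hne : ∀ c : ℝ, c ≠ 0 → lift r (ContinuousMap.const (Comp d) c) ≠ 0 := by
    intro c hc h
    have h1 : wt r ((0, 0) : Cyl d) * c = 0 := congrFun h (0, 0)
    exact mul_ne_zero (wt_pos r _).ne' hc h1
  have hneg : sint ρ (lift r (ContinuousMap.const (Comp d) (-1))) +
      sint μ (fun u => ContinuousMap.const (Comp d) (-1 : ℝ) (bdy u)) =
      -(sint ρ (lift r (ContinuousMap.const (Comp d) 1)) +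
      sint μ (fun u => ContinuousMap.const (Comp d) (1 : ℝ) (bdy u))) := by
    have e1 : lift r (ContinuousMap.const (Comp d) (-1 : ℝ)) =
        fun p => -lift r (ContinuousMap.const (Comp d) (1 : ℝ)) p := by
      ext p; simp [lift]
    have e2 : (fun u : Td d => ContinuousMap.const (Comp d) (-1 : ℝ) (bdy u)) =
        fun u => -ContinuousMap.const (Comp d) (1 : ℝ) (bdy u) := by
      ext u; simp
    rw [e1, e2]
    simp only [sint, integral_neg]
    ring
  apply Real.sSup_nonneg'
  rcases le_total 0 (sint ρ (lift r (ContinuousMap.const (Comp d) 1)) +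
      sint μ (fun u => ContinuousMap.const (Comp d) (1 : ℝ) (bdy u))) with h | h
  · exact ⟨_, ⟨_, _, lift_memBrC hr _, lift_isRecession _, hne 1 one_ne_zero, rfl⟩,
      div_nonneg h (wnorm_nonneg _ _)⟩
  · refine ⟨_, ⟨_, _, lift_memBrC hr _, lift_isRecession _, hne (-1) (by norm_num), rfl⟩,
      div_nonneg ?_ (wnorm_nonneg _ _)⟩
    rw [hneg]; linarith

lemma wnorm_lift_pos (g : C(Comp d, ℝ)) (h : lift r g ≠ 0) : 0 < wnorm r (lift r g) := by
  obtain ⟨p, hp⟩ := Function.ne_iff.1 h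
  have h1 := abs_lift_le_wnorm r g p
  have h2 : 0 < |lift r g p| := abs_pos.2 hp
  exact pos_of_mul_pos_left (h2.trans_le h1) (wt_pos r p).le

lemma pairing_le_pairNorm (hr : 0 < r) {ρ : SignedMeasure (Cyl d)} (μ : SignedMeasure (Td d))
    (hρ : MemMr r ρ) (g : C(Comp d, ℝ)) (hg : ∀ k, |g k| ≤ 1) :
    sint ρ (lift r g) + sint μ (fun u => g (bdy u)) ≤ pairNorm r ρ μ := by
  have h0 := pairNorm_nonneg hr ρ μ
  by_cases h : lift r g = 0
  · have h1 := pairing_le hr μ hρ g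
    have h2 : wnorm r (lift r g) = 0 := by rw [h]; simp [wnorm]
    rw [h2, mul_zero] at h1
    exact ((le_abs_self _).trans h1).trans h0
  · have h1 : (sint ρ (lift r g) + sint μ (fun u => g (bdy u))) / wnorm r (lift r g) ≤
        pairNorm r ρ μ :=
      le_csSup ⟨_, quotient_le hr μ hρ⟩
        ⟨_, _, lift_memBrC hr g, lift_isRecession g, h, rfl⟩
    rw [div_le_iff₀ (wnorm_lift_pos g h)] at h1
    exact h1.trans (mul_le_of_le_one_right h0 (wnorm_lift_le r hg))

/-- The dual norm of a pair is in fact the sum of the two norms. -/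
lemma pairNorm_eq (hr : 0 < r) {ρ : SignedMeasure (Cyl d)} (μ : SignedMeasure (Td d))
    (hρ : MemMr r ρ) : pairNorm r ρ μ = tvr r ρ + tvT μ := by
  apply le_antisymm
  · exact Real.sSup_le (quotient_le hr μ hρ)
      (add_nonneg ENNReal.toReal_nonneg ENNReal.toReal_nonneg)
  · apply le_of_forall_pos_le_add
    intro ε hε
    obtain ⟨g, hg, h⟩ := exists_almost_norming hr μ hρ hε
    have := pairing_le_pairNorm hr μ hρ g hg
    linarith

lemma eq_zero_of_totalVariation_univ {α : Type*} [MeasurableSpace α] {s : SignedMeasure α}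
    (h : s.totalVariation Set.univ = 0) : s = 0 := by
  ext i _
  exact s.null_of_totalVariation_zero (measure_mono_null (Set.subset_univ i) h)

lemma eq_zero_of_pairNorm (hr : 0 < r) {ρ : SignedMeasure (Cyl d)} {μ : SignedMeasure (Td d)}
    (hρ : MemMr r ρ) (h : pairNorm r ρ μ = 0) : ρ = 0 ∧ μ = 0 := by
  rw [pairNorm_eq hr μ hρ] at h
  have h1 : 0 ≤ tvr r ρ := ENNReal.toReal_nonneg
  have h2 : 0 ≤ tvT μ := ENNReal.toReal_nonneg
  have h3 : tvr r ρ = 0 := by linarith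
  have h4 : tvT μ = 0 := by linarith
  constructor
  · apply eq_zero_of_totalVariation_univ
    have h5 : ∫ _, (1 : ℝ) ∂ρ.totalVariation ≤ ∫ p, wt r p ∂ρ.totalVariation :=
      integral_mono (integrable_const _) ((memMr_iff hr ρ).1 hρ) (wt_ge_one r)
    rw [← tvr_eq hr, h3] at h5
    simp only [integral_const, smul_eq_mul, mul_one] at h5
    exact (measureReal_eq_zero_iff).1 (le_antisymm h5 measureReal_nonneg)
  · apply eq_zero_of_totalVariation_univ
    exact (measureReal_eq_zero_iff).1 h4

/-- A finite measure on the compactification splits into an interior part, which becomes a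
measure on the cylinder after dividing by the weight, and a boundary part on the torus. -/
lemma exists_split (hr : 0 < r) (a : Measure (Comp d)) [IsFiniteMeasure a] :
    ∃ (ρ : Measure (Cyl d)) (μ : Measure (Td d)), IsFiniteMeasure ρ ∧ IsFiniteMeasure μ ∧
      Integrable (wt r) ρ ∧ ∀ g : C(Comp d, ℝ),
        ∫ k, g k ∂a = ∫ p, lift r g p ∂ρ + ∫ u, g (bdy u) ∂μ := by
  let B : Set (Comp d) := {k | k.2 = 1}
  have hB : MeasurableSet B := measurable_snd (measurableSet_singleton 1)
  let m : Measure (Cyl d) := (a.restrict Bᶜ).map embInv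
  have hcm : Continuous fun p : Cyl d => (wt r p)⁻¹ :=
    (continuous_wt hr).inv₀ fun p => (wt_pos r p).ne'
  have hwm : Measurable fun p : Cyl d => ENNReal.ofReal ((wt r p)⁻¹) :=
    hcm.measurable.ennreal_ofReal
  have hpos : ∀ p : Cyl d, 0 ≤ (wt r p)⁻¹ := fun p => (inv_pos.2 (wt_pos r p)).le
  have hfin : Integrable (fun p : Cyl d => (wt r p)⁻¹) m := by
    refine Integrable.of_bound hcm.aestronglyMeasurable 1 (Eventually.of_forall fun p => ?_)
    rw [Real.norm_of_nonneg (hpos p)]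
    exact inv_le_one_of_one_le₀ (wt_ge_one r p)
  refine ⟨m.withDensity fun p => ENNReal.ofReal ((wt r p)⁻¹), (a.restrict B).map Prod.fst,
    isFiniteMeasure_withDensity_ofReal hfin.2, inferInstance, ?_, ?_⟩
  · rw [integrable_withDensity_iff_integrable_smul' hwm (by simp)]
    refine (integrable_const (1 : ℝ)).congr (Eventually.of_forall fun p => ?_)
    dsimp only
    rw [ENNReal.toReal_ofReal (hpos p), smul_eq_mul, inv_mul_cancel₀ (wt_pos r p).ne']
  · intro g
    rw [integral_withDensity_eq_integral_toReal_smul hwm (by simp)]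
    have h1 : ∀ p : Cyl d, (ENNReal.ofReal ((wt r p)⁻¹)).toReal • lift r g p = g (emb p) := by
      intro p
      rw [ENNReal.toReal_ofReal (hpos p), smul_eq_mul, lift,
        inv_mul_cancel_left₀ (wt_pos r p).ne']
    simp_rw [h1]
    have e1 : ∫ p, g (emb p) ∂m = ∫ k in Bᶜ, g (emb (embInv k)) ∂a :=
      integral_map measurable_embInv.aemeasurable
        (g.continuous.comp continuous_emb).aestronglyMeasurable
    have e2 : ∫ u, g (bdy u) ∂(a.restrict B).map Prod.fst = ∫ k in B, g (bdy k.1) ∂a :=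
      integral_map measurable_fst.aemeasurable
        (g.continuous.comp continuous_bdy).aestronglyMeasurable
    rw [e1, e2]
    have h2 : ∫ k in Bᶜ, g (emb (embInv k)) ∂a = ∫ k in Bᶜ, g k ∂a :=
      setIntegral_congr_fun hB.compl fun k hk => by
        rw [emb_embInv hk]
    have h3 : ∫ k in B, g (bdy k.1) ∂a = ∫ k in B, g k ∂a :=
      setIntegral_congr_fun hB fun k hk => congrArg g (Prod.ext rfl (Eq.symm hk))
    rw [h2, h3, add_comm]
    exact (integral_add_compl hB (g.continuous.integrable_of_hasCompactSupport
      (HasCompactSupport.of_compactSpace _))).symm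

lemma exists_representation (hr : 0 < r) (φ : (Cyl d → ℝ) → ℝ)
    (hadd : ∀ F G : Cyl d → ℝ, MemCbar r F → MemCbar r G → φ (F + G) = φ F + φ G)
    (hsmul : ∀ (c : ℝ) (F : Cyl d → ℝ), MemCbar r F → φ (c • F) = c * φ F)
    (hb : ∃ C : ℝ, ∀ F : Cyl d → ℝ, MemCbar r F → |φ F| ≤ C * wnorm r F) :
    ∃ (ρ : SignedMeasure (Cyl d)) (μ : SignedMeasure (Td d)), MemMr r ρ ∧
      ∀ g : C(Comp d, ℝ), φ (lift r g) = sint ρ (lift r g) + sint μ (fun u => g (bdy u)) := by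
  obtain ⟨C, hC⟩ := hb
  have hmem : ∀ g : C(Comp d, ℝ), MemCbar r (lift r g) := fun g =>
    ⟨lift_memBrC hr g, _, lift_isRecession g⟩
  let Ψ : C(Comp d, ℝ) →ₗ[ℝ] ℝ :=
    { toFun := fun g => φ (lift r g)
      map_add' := fun g h => by
        rw [← hadd _ _ (hmem g) (hmem h)]
        congr 1; ext p; simp [lift, mul_add]
      map_smul' := fun c g => by
        rw [RingHom.id_apply, smul_eq_mul, ← hsmul _ _ (hmem g)]
        congr 1; ext p; simp [lift, mul_left_comm] }
  have hΨ : ∀ g, |Ψ g| ≤ |C| * ‖g‖ := by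
    intro g
    calc |Ψ g| ≤ C * wnorm r (lift r g) := hC _ (hmem g)
      _ ≤ |C| * wnorm r (lift r g) :=
        mul_le_mul_of_nonneg_right (le_abs_self C) (wnorm_nonneg _ _)
      _ ≤ |C| * ‖g‖ := mul_le_mul_of_nonneg_left
        (wnorm_lift_le r fun k => g.norm_coe_le_norm k) (abs_nonneg C)
  obtain ⟨a, b, ha, hb, hab⟩ := signed_riesz Ψ |C| hΨ
  obtain ⟨ρa, μa, _, _, iwa, hsa⟩ := exists_split hr a
  obtain ⟨ρb, μb, _, _, iwb, hsb⟩ := exists_split hr b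
  refine ⟨ρa.toSignedMeasure - ρb.toSignedMeasure, μa.toSignedMeasure - μb.toSignedMeasure,
    ?_, ?_⟩
  · rw [memMr_iff hr]
    exact (iwa.add_measure iwb).mono_measure (totalVariation_sub_le ρa ρb)
  · intro g
    change Ψ g = _
    rw [sint_sub _ _ (integrable_lift hr iwa g) (integrable_lift hr iwb g),
      sint_sub _ _ (integrable_bdy μa g) (integrable_bdy μb g), hab, hsa, hsb]
    ring

lemma representation_unique (hr : 0 < r) {ρ ρ' : SignedMeasure (Cyl d)}
    {μ μ' : SignedMeasure (Td d)} (hρ : MemMr r ρ) (hρ' : MemMr r ρ')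
    (h : ∀ g : C(Comp d, ℝ), sint ρ (lift r g) + sint μ (fun u => g (bdy u)) =
      sint ρ' (lift r g) + sint μ' (fun u => g (bdy u))) : ρ = ρ' ∧ μ = μ' := by
  have w1 := (memMr_iff hr ρ).1 hρ
  have w2 := (memMr_iff hr ρ').1 hρ'
  have hm : MemMr r (ρ - ρ') :=
    (memMr_iff hr _).2 ((w1.add_measure w2).mono_measure (totalVariation_sub_signed_le ρ ρ'))
  have hz : pairNorm r (ρ - ρ') (μ - μ') = 0 := by
    refine le_antisymm (Real.sSup_le ?_ le_rfl) (pairNorm_nonneg hr _ _)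
    rintro y ⟨F, f, hF, hf, -, rfl⟩
    obtain ⟨g, rfl, rfl⟩ := exists_lift hr hF hf
    have e : sint (ρ - ρ') (lift r g) + sint (μ - μ') (fun u => g (bdy u)) = 0 := by
      rw [sint_sub_signed (integrable_lift hr w1 g) (integrable_lift hr w2 g),
        sint_sub_signed (integrable_bdy _ g) (integrable_bdy _ g)]
      linarith [h g]
    rw [e, zero_div]
  obtain ⟨h1, h2⟩ := eq_zero_of_pairNorm hr hm hz
  exact ⟨sub_eq_zero.1 h1, sub_eq_zero.1 h2⟩

end Pairs

/-- For `r > 0`: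
(a) the quantity `‖(ρ,μ)‖_{TV,r}` satisfies
`max{‖ρ‖_{TV,r}, ‖μ‖_{TV}} ≤ ‖(ρ,μ)‖_{TV,r} ≤ ‖ρ‖_{TV,r} + ‖μ‖_{TV}` (and is definite),
so it is a norm on `𝓜_r(𝕋^d × ℝ₊) × 𝓜(𝕋^d)` equivalent to the product norms;
(b) every bounded linear functional `π` on `C̄_r(𝕋^d × ℝ₊)` is represented by a unique
pair `(ρ,μ) ∈ 𝓜_r(𝕋^d × ℝ₊) × 𝓜(𝕋^d)` via `π(F) = ∫ F dρ + ∫ RF dμ`, and conversely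
every such pair gives a bounded linear functional `J(ρ,μ)` on `C̄_r(𝕋^d × ℝ₊)`; i.e. the
resulting map `I` is a surjective linear isometry with inverse `J`. -/
theorem generalized_young_functional_representation (d : ℕ) (r : ℝ) (hr : 0 < r) :
    -- (a)
    (∀ (ρ : SignedMeasure (Cyl d)) (μ : SignedMeasure (Td d)), MemMr r ρ →
      (max (tvr r ρ) (tvT μ) ≤ pairNorm r ρ μ ∧ pairNorm r ρ μ ≤ tvr r ρ + tvT μ) ∧
      (pairNorm r ρ μ = 0 → ρ = 0 ∧ μ = 0)) ∧
    -- (b) existence and uniqueness of the representing pair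
    (∀ φ : (Cyl d → ℝ) → ℝ,
      (∀ F G : Cyl d → ℝ, MemCbar r F → MemCbar r G → φ (F + G) = φ F + φ G) →
      (∀ (c : ℝ) (F : Cyl d → ℝ), MemCbar r F → φ (c • F) = c * φ F) →
      (∃ C : ℝ, ∀ F : Cyl d → ℝ, MemCbar r F → |φ F| ≤ C * wnorm r F) →
      ∃! p : SignedMeasure (Cyl d) × SignedMeasure (Td d),
        MemMr r p.1 ∧
        ∀ (F : Cyl d → ℝ) (f : Td d → ℝ), MemBrC r F → IsRecession r F f →
          φ F = sint p.1 F + sint p.2 f) ∧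
    -- (b') surjectivity: every pair represents a bounded linear functional on `C̄_r`
    (∀ (ρ : SignedMeasure (Cyl d)) (μ : SignedMeasure (Td d)), MemMr r ρ →
      ∃ C : ℝ, ∀ (F : Cyl d → ℝ) (f : Td d → ℝ), MemBrC r F → IsRecession r F f →
        |sint ρ F + sint μ f| ≤ C * wnorm r F) := by
  refine ⟨?_, ?_, ?_⟩
  · intro ρ μ hρ
    refine ⟨?_, eq_zero_of_pairNorm hr hρ⟩
    rw [pairNorm_eq hr μ hρ]
    have h1 : 0 ≤ tvr r ρ := ENNReal.toReal_nonneg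
    have h2 : 0 ≤ tvT μ := ENNReal.toReal_nonneg
    exact ⟨max_le (by linarith) (by linarith), le_rfl⟩
  · intro φ hadd hsmul hb
    obtain ⟨ρ, μ, hρ, h⟩ := exists_representation hr φ hadd hsmul hb
    refine ⟨(ρ, μ), ⟨hρ, ?_⟩, ?_⟩
    · intro F f hF hf
      obtain ⟨g, rfl, rfl⟩ := exists_lift hr hF hf
      exact h g
    · rintro ⟨ρ', μ'⟩ ⟨hρ', h'⟩
      obtain ⟨e1, e2⟩ := representation_unique hr hρ' hρ fun g =>
        (h' _ _ (lift_memBrC hr g) (lift_isRecession g)).symm.trans (h g)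
      exact Prod.ext e1 e2
  · intro ρ μ hρ
    refine ⟨tvr r ρ + tvT μ, fun F f hF hf => ?_⟩
    obtain ⟨g, rfl, rfl⟩ := exists_lift hr hF hf
    exact pairing_le hr μ hρ g
end
end

section
/- Let r > 0 and let I = (I¹, I²) : 𝓜̄_r(𝕋^d×ℝ₊) → 𝓜_r(𝕋^d×ℝ₊) × 𝓜(𝕋^d) be the unique map satisfying π(F) = ∫ F dI¹(π) + ∫ RF dI²(π) for all F ∈ C̄_r(𝕋^d×ℝ₊) and all π. Call π ∈ 𝓜̄_r(𝕋^d×ℝ₊) nonnegative if π(F) ≥ 0 for every F ∈ C̄_r(𝕋^d×ℝ₊) with F ≥ 0. Then: (i) π is nonnegative if and only if both I¹(π) and I²(π) are nonnegative measures; in particular I maps the cone of nonnegative elements of 𝓜̄_r(𝕋^d×ℝ₊) onto the product of the cones of nonnegative elements of 𝓜_r(𝕋^d×ℝ₊) and of 𝓜(𝕋^d). (ii) I¹ is weak-star continuous, and I² is positively upper weak-star semicontinuous on nonnegative elements: for every net (π_α) of nonnegative elements of 𝓜̄_r(𝕋^d×ℝ₊) converging in the weak-star topology to a nonnegative π, and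 every nonnegative f ∈ C(𝕋^d), one has limsup_α I²(π_α)(f) ≤ I²(π)(f). -/
/-!
The argument rests on the sequence of test functions
`F_n(u, lam) = f(u) (1 + lam ^ r) chi_n(lam)` (`escapeFn`), where `chi_n` is a continuous cutoff
vanishing on `[0, n]` and equal to `1` on `[n + 1, ∞)`. Each `F_n` has recession function `f`, while
`∫ F_n dρ → 0` by dominated convergence (`tendsto_sint_escapeFn`), so `φ(F_n) → ∫ f dμ` for every
functional `φ` represented by `(ρ, μ)`.

For (i), if `φ ≥ 0` then testing against the `F_n` gives `∫ f dμ ≥ 0` for all continuous `f ≥ 0`.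
Since `r > 0`, a bounded continuous function on the cylinder has recession function `0`, so testing
against it gives `∫ G dρ ≥ 0` for all bounded continuous `G ≥ 0`. A signed measure with
this property is nonnegative (`nonneg_of_sint_nonneg`): thickened indicators and inner regularity by
closed sets show that the negative part vanishes. The converse is immediate because the recession
function of a nonnegative function is nonnegative.

For (ii), functions in `C_r` have recession function `0`, so on them `φ` is integration against `ρ`.
For semicontinuity, positivity of `ρ_i` gives `∫ f dμ_i ≤ φ_i(F_n)`; passing to the limsup in `i`
yields `limsup ∫ f dμ_i ≤ φ(F_n)`, and `n → ∞` concludes.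
-/

open MeasureTheory Filter Topology NNReal

noncomputable section

variable {d : ℕ}

/-- Membership in `C_r(𝕋^d × ℝ₊)`. -/
def MemCr (r : ℝ) (F : Cyl d → ℝ) : Prop :=
  MemBrC r F ∧
    Tendsto (fun lam : ℝ≥0 => ⨆ u : Td d, |F (u, lam)| / (1 + (lam : ℝ) ^ r)) atTop (𝓝 0)

/-- `φ` is a bounded linear functional on `C̄_r(𝕋^d × ℝ₊)`, i.e. an element of
`𝓜̄_r(𝕋^d × ℝ₊) = C̄_r(𝕋^d × ℝ₊)^*`. -/
def BddLinOnCbar (r : ℝ) (φ : (Cyl d → ℝ) → ℝ) : Prop :=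
  (∀ F G : Cyl d → ℝ, MemCbar r F → MemCbar r G → φ (F + G) = φ F + φ G) ∧
  (∀ (c : ℝ) (F : Cyl d → ℝ), MemCbar r F → φ (c • F) = c * φ F) ∧
  ∃ C : ℝ, ∀ F : Cyl d → ℝ, MemCbar r F → |φ F| ≤ C * wnorm r F

/-- `(ρ,μ) = (I¹(π), I²(π))` is the representing pair of `π = φ`:
`π(F) = ∫ F dρ + ∫ RF dμ` for every `F ∈ C̄_r(𝕋^d × ℝ₊)`. -/
def Represents (r : ℝ) (φ : (Cyl d → ℝ) → ℝ)
    (ρ : SignedMeasure (Cyl d)) (μ : SignedMeasure (Td d)) : Prop :=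
  MemMr r ρ ∧
  ∀ (F : Cyl d → ℝ) (f : Td d → ℝ), MemBrC r F → IsRecession r F f →
    φ F = sint ρ F + sint μ f

/-- `φ` is a nonnegative generalized Young functional. -/
def NonnegOnCbar (r : ℝ) (φ : (Cyl d → ℝ) → ℝ) : Prop :=
  ∀ F : Cyl d → ℝ, MemCbar r F → (∀ p : Cyl d, 0 ≤ F p) → 0 ≤ φ F

/-! ### Nonnegative signed measures -/

lemma negPart_eq_zero_of_nonneg {α : Type*} [MeasurableSpace α] {ρ : SignedMeasure α}
    (h : 0 ≤ ρ) : ρ.toJordanDecomposition.negPart = 0 := by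
  obtain ⟨A, hA, hpos, hneg⟩ := ρ.toJordanDecomposition.mutuallySingular
  have h1 := ρ.apply_eq_posPart_real_sub_negPart_real hA
  have h2 : 0 ≤ ρ A := h A hA
  have h3 : ρ.toJordanDecomposition.negPart.real A = 0 := by
    have h4 : ρ.toJordanDecomposition.posPart.real A = 0 := by simp [Measure.real, hpos]
    have := measureReal_nonneg (μ := ρ.toJordanDecomposition.negPart) (s := A)
    linarith
  rw [measureReal_eq_zero_iff] at h3
  rw [← Measure.measure_univ_eq_zero, ← Set.union_compl_self A]
  exact measure_union_null h3 hneg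

lemma nonneg_of_negPart_eq_zero {α : Type*} [MeasurableSpace α] {ρ : SignedMeasure α}
    (h : ρ.toJordanDecomposition.negPart = 0) : 0 ≤ ρ := by
  intro A hA
  rw [ρ.apply_eq_posPart_real_sub_negPart_real hA, h]
  simp

lemma sint_nonneg {α : Type*} [MeasurableSpace α] {ρ : SignedMeasure α}
    (h : 0 ≤ ρ) {f : α → ℝ} (hf : ∀ x, 0 ≤ f x) : 0 ≤ sint ρ f := by
  unfold sint
  rw [negPart_eq_zero_of_nonneg h]
  simpa using integral_nonneg hf

lemma sint_zero {α : Type*} [MeasurableSpace α] (ρ : SignedMeasure α) :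
    sint ρ (fun _ => 0) = 0 := by
  simp [sint]

/-- A signed Borel measure on a metric space which is nonnegative on bounded continuous nonnegative
functions is nonnegative: closed sets have at least as much positive as negative mass, and the
negative part is inner regular on a set that is null for the positive part. -/
lemma nonneg_of_sint_nonneg {X : Type*} [PseudoEMetricSpace X] [MeasurableSpace X] [BorelSpace X]
    {ρ : SignedMeasure X}
    (h : ∀ G : X → ℝ, Continuous G → (∀ x, 0 ≤ G x) → (∃ C, ∀ x, G x ≤ C) → 0 ≤ sint ρ G) :
    0 ≤ ρ := by
  apply nonneg_of_negPart_eq_zero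
  have hcl : ∀ K : Set X, IsClosed K →
      ρ.toJordanDecomposition.negPart.real K ≤ ρ.toJordanDecomposition.posPart.real K := by
    intro K hK
    have hδ : ∀ n : ℕ, (0 : ℝ) < 1 / ((n : ℝ) + 1) := fun n => Nat.one_div_pos_of_nat
    have hl : Tendsto (fun n : ℕ => 1 / ((n : ℝ) + 1)) atTop (𝓝 0) :=
      tendsto_one_div_add_atTop_nhds_zero_nat
    refine le_of_tendsto_of_tendsto'
      (tendsto_integral_thickenedIndicator_of_isClosed _ hK hδ hl)
      (tendsto_integral_thickenedIndicator_of_isClosed _ hK hδ hl) fun n => ?_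
    have := h (fun x => (thickenedIndicator (hδ n) K x : ℝ))
      (NNReal.continuous_coe.comp (thickenedIndicator (hδ n) K).continuous)
      (fun x => NNReal.coe_nonneg _)
      ⟨1, fun x => by exact_mod_cast thickenedIndicator_le_one (hδ n) K x⟩
    unfold sint at this
    linarith
  obtain ⟨A, hA, hpos, hneg⟩ := ρ.toJordanDecomposition.mutuallySingular
  have h3 : ρ.toJordanDecomposition.negPart A = 0 := by
    rw [hA.measure_eq_iSup_isClosed_of_ne_top (measure_ne_top _ _)]
    simp only [ENNReal.iSup_eq_zero]
    intro K hKA hK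
    have h4 := hcl K hK
    have h5 : ρ.toJordanDecomposition.posPart.real K = 0 := by
      simp [Measure.real, measure_mono_null hKA hpos]
    rw [← measureReal_eq_zero_iff]
    exact le_antisymm (h4.trans h5.le) measureReal_nonneg
  rw [← Measure.measure_univ_eq_zero, ← Set.union_compl_self A]
  exact measure_union_null h3 hneg

/-! ### Recession functions -/

lemma one_add_rpow_pos (r : ℝ) (lam : ℝ≥0) : 0 < 1 + (lam : ℝ) ^ r := by
  have := Real.rpow_nonneg lam.coe_nonneg r
  linarith

lemma continuous_one_add_rpow {r : ℝ} (hr : 0 < r) :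
    Continuous (fun p : Cyl d => 1 + (p.2 : ℝ) ^ r) := by
  refine continuous_const.add (Continuous.rpow_const (by fun_prop) fun _ => Or.inr hr.le)

lemma isRecession_zero_of_memCr {r : ℝ} {G : Cyl d → ℝ} (h : MemCr r G) :
    IsRecession r G (fun _ => 0) := by
  refine ⟨continuous_const, h.2.congr fun lam => ?_⟩
  refine iSup_congr fun u => ?_
  rw [sub_zero, abs_div, abs_of_pos (one_add_rpow_pos r lam)]

lemma memCr_of_bounded {r : ℝ} (hr : 0 < r) {G : Cyl d → ℝ} (hG : Continuous G) {C : ℝ}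
    (h0 : ∀ p, 0 ≤ G p) (hC : ∀ p, G p ≤ C) : MemCr r G := by
  have hC0 : 0 ≤ C := (h0 (0, 0)).trans (hC _)
  refine ⟨⟨hG, C, fun p => ?_⟩, ?_⟩
  · rw [abs_of_nonneg (h0 p)]
    have := mul_nonneg hC0 (Real.rpow_nonneg p.2.coe_nonneg r)
    nlinarith [hC p]
  · have hlim : Tendsto (fun lam : ℝ≥0 => C / (1 + (lam : ℝ) ^ r)) atTop (𝓝 0) := by
      refine Tendsto.div_atTop tendsto_const_nhds (tendsto_atTop_add_const_left _ _ ?_)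
      exact (_root_.tendsto_rpow_atTop hr).comp (NNReal.tendsto_coe_atTop.2 tendsto_id)
    refine squeeze_zero (fun lam => Real.iSup_nonneg fun u => ?_)
      (fun lam => ciSup_le fun u => ?_) hlim
    · exact div_nonneg (abs_nonneg _) (one_add_rpow_pos r lam).le
    · rw [abs_of_nonneg (h0 _)]
      exact div_le_div_of_nonneg_right (hC _) (one_add_rpow_pos r lam).le

/-- Boundedness of `F` in the weighted norm is used to pass from the (real-valued) supremum over
the torus to single points. -/
lemma recession_nonneg {r : ℝ} {F : Cyl d → ℝ} {f : Td d → ℝ} (hF : MemBrC r F)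
    (hf : IsRecession r F f) (h0 : ∀ p, 0 ≤ F p) (u : Td d) : 0 ≤ f u := by
  obtain ⟨-, C, hC⟩ := hF
  obtain ⟨M, hM⟩ := isCompact_univ.exists_bound_of_continuousOn hf.1.continuousOn
  have hb : ∀ lam : ℝ≥0, BddAbove (Set.range fun u : Td d =>
      |F (u, lam) / (1 + (lam : ℝ) ^ r) - f u|) := by
    rintro lam
    refine ⟨C + M, ?_⟩
    rintro _ ⟨v, rfl⟩
    have hw := one_add_rpow_pos r lam
    have h1 : |F (v, lam) / (1 + (lam : ℝ) ^ r)| ≤ C := by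
      rw [abs_div, abs_of_pos hw, div_le_iff₀ hw]
      exact hC (v, lam)
    have h2 : |f v| ≤ M := hM v (Set.mem_univ v)
    exact (abs_sub _ _).trans (add_le_add h1 h2)
  have : Tendsto (fun lam : ℝ≥0 => F (u, lam) / (1 + (lam : ℝ) ^ r) - f u) atTop (𝓝 0) :=
    squeeze_zero_norm (fun lam => le_ciSup (hb lam) u) hf.2
  have h2 := this.add_const (f u)
  simp only [sub_add_cancel, zero_add] at h2
  exact ge_of_tendsto' h2 fun lam => div_nonneg (h0 _) (one_add_rpow_pos r lam).le

/-! ### Test functions escaping to infinity -/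

/-- The function `f(u) (1 + lam ^ r) chi_n(lam)`, where the cutoff `chi_n` vanishes for `lam ≤ n`,
is `1` for `lam ≥ n + 1` and is affine in between. -/
def escapeFn (r : ℝ) (f : Td d → ℝ) (n : ℕ) (p : Cyl d) : ℝ :=
  f p.1 * (1 + (p.2 : ℝ) ^ r) * max 0 (min 1 ((p.2 : ℝ) - n))

lemma continuous_escapeFn {r : ℝ} (hr : 0 < r) {f : Td d → ℝ} (hf : Continuous f) (n : ℕ) :
    Continuous (escapeFn r f n) := by
  have := continuous_one_add_rpow (d := d) hr
  unfold escapeFn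
  fun_prop

lemma escapeFn_nonneg (r : ℝ) {f : Td d → ℝ} (h0 : ∀ u, 0 ≤ f u) (n : ℕ) (p : Cyl d) :
    0 ≤ escapeFn r f n p :=
  mul_nonneg (mul_nonneg (h0 _) (one_add_rpow_pos r p.2).le) (le_max_left _ _)

lemma exists_abs_escapeFn_le (r : ℝ) {f : Td d → ℝ} (hf : Continuous f) :
    ∃ M : ℝ, ∀ n p, |escapeFn r f n p| ≤ M * (1 + (p.2 : ℝ) ^ r) := by
  obtain ⟨M, hM⟩ := isCompact_univ.exists_bound_of_continuousOn hf.continuousOn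
  refine ⟨M, fun n p => ?_⟩
  have hw := one_add_rpow_pos r p.2
  have h2 : |f p.1| ≤ M := hM p.1 (Set.mem_univ _)
  unfold escapeFn
  rw [abs_mul, abs_mul, abs_of_pos hw]
  have h3 : |max 0 (min 1 ((p.2 : ℝ) - n))| ≤ 1 := by
    rw [abs_of_nonneg (le_max_left _ _)]
    exact max_le zero_le_one (min_le_left _ _)
  have h4 : |f p.1| * (1 + (p.2 : ℝ) ^ r) ≤ M * (1 + (p.2 : ℝ) ^ r) :=
    mul_le_mul_of_nonneg_right h2 hw.le
  exact (mul_le_of_le_one_right (mul_nonneg (abs_nonneg _) hw.le) h3).trans h4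

lemma memBrC_escapeFn {r : ℝ} (hr : 0 < r) {f : Td d → ℝ} (hf : Continuous f) (n : ℕ) :
    MemBrC r (escapeFn r f n) := by
  obtain ⟨M, hM⟩ := exists_abs_escapeFn_le r hf
  exact ⟨continuous_escapeFn hr hf n, M, hM n⟩

lemma isRecession_escapeFn (r : ℝ) {f : Td d → ℝ} (hf : Continuous f) (n : ℕ) :
    IsRecession r (escapeFn r f n) f := by
  refine ⟨hf, tendsto_const_nhds.congr' ?_⟩
  filter_upwards [eventually_ge_atTop ((n : ℝ≥0) + 1)] with lam hlam
  have h1 : (n : ℝ) + 1 ≤ lam := by exact_mod_cast hlam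
  have h2 : max 0 (min 1 ((lam : ℝ) - n)) = 1 := by
    rw [min_eq_left (by linarith), max_eq_right zero_le_one]
  have hw := (one_add_rpow_pos r lam).ne'
  simp [escapeFn, h2, hw]

lemma memCbar_escapeFn {r : ℝ} (hr : 0 < r) {f : Td d → ℝ} (hf : Continuous f) (n : ℕ) :
    MemCbar r (escapeFn r f n) :=
  ⟨memBrC_escapeFn hr hf n, f, isRecession_escapeFn r hf n⟩

lemma integrable_one_add_rpow {r : ℝ} (hr : 0 < r) {ν : Measure (Cyl d)} [IsFiniteMeasure ν]
    (h : ∫⁻ p : Cyl d, ENNReal.ofReal ((p.2 : ℝ) ^ r) ∂ν < ⊤) :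
    Integrable (fun p : Cyl d => 1 + (p.2 : ℝ) ^ r) ν := by
  refine (integrable_const 1).add ?_
  have hc : Continuous (fun p : Cyl d => (p.2 : ℝ) ^ r) :=
    Continuous.rpow_const (by fun_prop) fun _ => Or.inr hr.le
  refine ⟨hc.measurable.aestronglyMeasurable, ?_⟩
  rw [hasFiniteIntegral_iff_ofReal
    (Eventually.of_forall fun p => Real.rpow_nonneg p.2.coe_nonneg r)]
  exact h

lemma tendsto_integral_escapeFn {r : ℝ} (hr : 0 < r) {f : Td d → ℝ} (hf : Continuous f)
    {ν : Measure (Cyl d)} [IsFiniteMeasure ν]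
    (h : ∫⁻ p : Cyl d, ENNReal.ofReal ((p.2 : ℝ) ^ r) ∂ν < ⊤) :
    Tendsto (fun n => ∫ p, escapeFn r f n p ∂ν) atTop (𝓝 0) := by
  obtain ⟨M, hM⟩ := exists_abs_escapeFn_le r hf
  rw [← integral_zero (Cyl d) ℝ (μ := ν)]
  refine tendsto_integral_of_dominated_convergence (fun p => M * (1 + (p.2 : ℝ) ^ r))
    (fun n => (continuous_escapeFn hr hf n).measurable.aestronglyMeasurable)
    ((integrable_one_add_rpow hr h).const_mul M)
    (fun n => Eventually.of_forall fun p => hM n p) (Eventually.of_forall fun p => ?_)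
  refine tendsto_const_nhds.congr' ?_
  obtain ⟨N, hN⟩ := exists_nat_ge (p.2 : ℝ)
  filter_upwards [eventually_ge_atTop N] with n hn
  have h1 : (N : ℝ) ≤ n := by exact_mod_cast hn
  have h2 : max 0 (min 1 ((p.2 : ℝ) - n)) = 0 :=
    max_eq_left ((min_le_right _ _).trans (by linarith))
  simp [escapeFn, h2]

lemma tendsto_sint_escapeFn {r : ℝ} (hr : 0 < r) {f : Td d → ℝ} (hf : Continuous f)
    {ρ : SignedMeasure (Cyl d)} (hρ : MemMr r ρ) :
    Tendsto (fun n => sint ρ (escapeFn r f n)) atTop (𝓝 0) := by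
  unfold MemMr SignedMeasure.totalVariation at hρ
  rw [lintegral_add_measure, ENNReal.add_lt_top] at hρ
  have := (tendsto_integral_escapeFn hr hf hρ.1).sub (tendsto_integral_escapeFn hr hf hρ.2)
  simpa [sint] using this

lemma tendsto_apply_escapeFn {r : ℝ} (hr : 0 < r) {φ : (Cyl d → ℝ) → ℝ}
    {ρ : SignedMeasure (Cyl d)} {μ : SignedMeasure (Td d)} (h : Represents r φ ρ μ)
    {f : Td d → ℝ} (hf : Continuous f) :
    Tendsto (fun n => φ (escapeFn r f n)) atTop (𝓝 (sint μ f)) := by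
  have h1 := (tendsto_sint_escapeFn hr hf h.1).add_const (sint μ f)
  rw [zero_add] at h1
  exact h1.congr fun n => (h.2 _ _ (memBrC_escapeFn hr hf n) (isRecession_escapeFn r hf n)).symm

/-! ### Represented functionals -/

lemma apply_eq_sint_of_memCr {r : ℝ} {φ : (Cyl d → ℝ) → ℝ}
    {ρ : SignedMeasure (Cyl d)} {μ : SignedMeasure (Td d)} (h : Represents r φ ρ μ)
    {G : Cyl d → ℝ} (hG : MemCr r G) : φ G = sint ρ G := by
  rw [h.2 G _ hG.1 (isRecession_zero_of_memCr hG), sint_zero, add_zero]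

lemma nonnegOnCbar_iff {r : ℝ} (hr : 0 < r) {φ : (Cyl d → ℝ) → ℝ}
    {ρ : SignedMeasure (Cyl d)} {μ : SignedMeasure (Td d)} (h : Represents r φ ρ μ) :
    NonnegOnCbar r φ ↔ (0 ≤ ρ ∧ 0 ≤ μ) := by
  constructor
  · intro hφ
    constructor
    · refine nonneg_of_sint_nonneg fun G hG h0 ⟨C, hC⟩ => ?_
      have hm := memCr_of_bounded hr hG h0 hC
      rw [← apply_eq_sint_of_memCr h hm]
      exact hφ G ⟨hm.1, _, isRecession_zero_of_memCr hm⟩ h0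
    · refine nonneg_of_sint_nonneg fun f hf h0 _ => ?_
      exact ge_of_tendsto' (tendsto_apply_escapeFn hr h hf) fun n =>
        hφ _ (memCbar_escapeFn hr hf n) (escapeFn_nonneg r h0 n)
  · rintro ⟨hρ, hμ⟩ F ⟨hF, f, hf⟩ h0
    rw [h.2 F f hF hf]
    exact add_nonneg (sint_nonneg hρ h0) (sint_nonneg hμ (recession_nonneg hF hf h0))

/-- Let `r > 0`.
(i) A generalized Young functional `π ∈ 𝓜̄_r(𝕋^d × ℝ₊)` is nonnegative iff both
coordinates `I¹(π) ∈ 𝓜_r(𝕋^d × ℝ₊)` and `I²(π) ∈ 𝓜(𝕋^d)` of its representing pair are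
nonnegative measures.
(ii) `I¹` is weak-star continuous, and `I²` is positively upper weak-star semicontinuous
in the sense that along any net of nonnegative functionals converging weak-star to a
nonnegative functional, `limsup_α I²(π_α)(f) ≤ I²(π)(f)` for nonnegative `f ∈ C(𝕋^d)`. -/
theorem positivity_and_semicontinuity_of_representation (d : ℕ) (r : ℝ) (hr : 0 < r) :
    -- (i)
    (∀ (φ : (Cyl d → ℝ) → ℝ) (ρ : SignedMeasure (Cyl d)) (μ : SignedMeasure (Td d)),
      BddLinOnCbar r φ → Represents r φ ρ μ →
      (NonnegOnCbar r φ ↔ (0 ≤ ρ ∧ 0 ≤ μ))) ∧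
    -- (ii)
    (∀ (ι : Type) (l : Filter ι), l.NeBot →
      ∀ (φi : ι → (Cyl d → ℝ) → ℝ) (ρi : ι → SignedMeasure (Cyl d))
        (μi : ι → SignedMeasure (Td d))
        (φ : (Cyl d → ℝ) → ℝ) (ρ : SignedMeasure (Cyl d)) (μ : SignedMeasure (Td d)),
        (∀ i, BddLinOnCbar r (φi i)) → (∀ i, Represents r (φi i) (ρi i) (μi i)) →
        BddLinOnCbar r φ → Represents r φ ρ μ →
        (∀ F : Cyl d → ℝ, MemCbar r F → Tendsto (fun i => φi i F) l (𝓝 (φ F))) →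
        -- weak-star continuity of `I¹`
        ((∀ G : Cyl d → ℝ, MemCr r G → Tendsto (fun i => sint (ρi i) G) l (𝓝 (sint ρ G))) ∧
        -- positive upper weak-star semicontinuity of `I²`
         ((∀ i, NonnegOnCbar r (φi i)) → NonnegOnCbar r φ →
          ∀ f : Td d → ℝ, Continuous f → (∀ u, 0 ≤ f u) →
            limsup (fun i => sint (μi i) f) l ≤ sint μ f))) := by
  refine ⟨fun φ ρ μ _ h => nonnegOnCbar_iff hr h, ?_⟩
  intro ι l hl φi ρi μi φ ρ μ _ hi _ h hlim
  refine ⟨fun G hG => ?_, fun hpos _ f hf h0 => ?_⟩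
  · have h1 := hlim G ⟨hG.1, _, isRecession_zero_of_memCr hG⟩
    rw [apply_eq_sint_of_memCr h hG] at h1
    exact h1.congr fun i => apply_eq_sint_of_memCr (hi i) hG
  · refine ge_of_tendsto' (tendsto_apply_escapeFn hr h hf) fun n => ?_
    have hn := hlim _ (memCbar_escapeFn hr hf n)
    rw [← hn.limsup_eq]
    -- The lower bound `0` makes the real-valued limsup on the left meaningful.
    have hcob : IsCoboundedUnder (· ≤ ·) l (fun i => sint (μi i) f) :=
      isCoboundedUnder_le_of_le l (x := 0) fun i =>
        sint_nonneg ((nonnegOnCbar_iff hr (hi i)).1 (hpos i)).2 h0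
    refine limsup_le_limsup (Eventually.of_forall fun i => ?_) hcob hn.isBoundedUnder_le
    change sint (μi i) f ≤ φi i (escapeFn r f n)
    rw [(hi i).2 _ _ (memBrC_escapeFn hr hf n) (isRecession_escapeFn r hf n)]
    have := sint_nonneg ((nonnegOnCbar_iff hr (hi i)).1 (hpos i)).1 (escapeFn_nonneg r h0 n)
    linarith
end
end

section
/- Let (M,τ) be a σ-compact topological space and let d be a metric on M that is continuous on M×M (with the product of the τ-topologies). Then the Borel σ-algebra of (M,τ) coincides with the Borel σ-algebra of the metric space (M,d). -/
/-!
The topology of the metric `d` is coarser than `τ`, since the open `d`-balls are `τ`-open, and it is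
Hausdorff, since distinct points are separated by balls of half their distance. This already gives
equality of the Borel σ-algebras: a `τ`-closed set is the countable union of its intersections with
the `τ`-compact sets of an exhausting sequence; each of these is `τ`-compact, hence compact for the
coarser topology, hence closed there because that topology is Hausdorff
(`borel_eq_of_le_of_t2`).
-/

/-- A σ-compact topology has the same Borel sets as any coarser Hausdorff topology. -/
theorem borel_eq_of_le_of_t2 {M : Type*} (t t' : TopologicalSpace M)
    (hσ : @SigmaCompactSpace M t) (hle : t ≤ t') (hT2 : @T2Space M t') :
    @borel M t = @borel M t' := by
  apply le_antisymm
  · rw [@borel_eq_generateFrom_isClosed M t]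
    refine MeasurableSpace.generateFrom_le fun C hC => ?_
    have hdecomp : C = ⋃ n, C ∩ @compactCovering M t hσ n := by
      rw [← Set.inter_iUnion, @iUnion_compactCovering M t hσ, Set.inter_univ]
    rw [hdecomp]
    refine @MeasurableSet.iUnion M ℕ (@borel M t') _ _ fun n => ?_
    have hcpt : @IsCompact M t (C ∩ @compactCovering M t hσ n) :=
      @IsCompact.inter_left M t _ _ (@isCompact_compactCovering M t hσ n) hC
    have hcpt' : @IsCompact M t' (C ∩ @compactCovering M t hσ n) := by
      simpa using @IsCompact.image M M t t' _ id hcpt (continuous_id_iff_le.2 hle)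
    have hclosed : @IsClosed M t' (C ∩ @compactCovering M t hσ n) :=
      @IsCompact.isClosed M t' hT2 _ hcpt'
    exact @IsClosed.measurableSet M _ t' (@borel M t')
      (@BorelSpace.opensMeasurable M t' (@borel M t') (@BorelSpace.mk M t' (@borel M t') rfl))
      hclosed
  · exact MeasurableSpace.generateFrom_mono fun s hs => hle s hs

/-- Let `(M, τ)` be a σ-compact topological space and let `d` be a
metric on `M` that is continuous on `M × M` (for the product of the `τ`-topologies).
Then the Borel σ-algebra of `(M, τ)` coincides with the Borel σ-algebra of the metric
space `(M, d)` (whose topology is generated by the open `d`-balls). -/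
theorem borel_eq_borel_of_continuous_metric
    (M : Type*) [TopologicalSpace M] [SigmaCompactSpace M]
    (dist : M → M → ℝ)
    (h_eq : ∀ x y, dist x y = 0 ↔ x = y)
    (h_symm : ∀ x y, dist x y = dist y x)
    (h_triangle : ∀ x y z, dist x z ≤ dist x y + dist y z)
    (h_cont : Continuous fun p : M × M => dist p.1 p.2) :
    borel M =
      @borel M (TopologicalSpace.generateFrom
        {s : Set M | ∃ (x : M) (ε : ℝ), 0 < ε ∧ s = {y | dist x y < ε}}) := by
  apply borel_eq_of_le_of_t2 _ _ inferInstance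
  · refine le_generateFrom ?_
    rintro s ⟨x, ε, -, rfl⟩
    exact isOpen_lt (h_cont.comp (Continuous.prodMk_right x)) continuous_const
  · refine @T2Space.mk M (TopologicalSpace.generateFrom _) fun x y hxy => ?_
    have hpos : 0 < dist x y := by
      have h0 : dist x y ≠ 0 := fun h => hxy ((h_eq x y).1 h)
      have h1 := h_triangle x y x
      rw [(h_eq x x).2 rfl, h_symm y x] at h1
      exact lt_of_le_of_ne (by linarith) h0.symm
    refine ⟨{z | dist x z < dist x y / 2}, {z | dist y z < dist x y / 2},
      TopologicalSpace.isOpen_generateFrom_of_mem ⟨x, _, half_pos hpos, rfl⟩,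
      TopologicalSpace.isOpen_generateFrom_of_mem ⟨y, _, half_pos hpos, rfl⟩, ?_, ?_, ?_⟩
    · simpa [(h_eq x x).2 rfl] using hpos
    · simpa [(h_eq y y).2 rfl] using hpos
    · refine Set.disjoint_left.2 fun z hxz hyz => ?_
      have h1 := h_triangle x z y
      rw [h_symm z y] at h1
      simp only [Set.mem_setOf_eq] at hxz hyz
      linarith
end

section
/- Let X be a separable Banach space and equip its dual X^* with the weak-star topology. Then X^* is a Radon space: every Borel probability measure on (X^*, weak-star) is a Radon measure, i.e. μ(B) = sup{μ(K) : K ⊆ B, K weak-star compact} for every weak-star Borel set B ⊆ X^*. -/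
open MeasureTheory

/-!
The closed balls `Kₙ` of radius `n` centred at the origin are weak-star compact (Banach–Alaoglu),
increase with `n` and cover `X^*`, so continuity from below gives `μ B = ⨆ n, μ (B ∩ Kₙ)`. Since
`X` is separable, each `Kₙ` is a compact metrizable space, and on such a space every finite Borel
measure is inner regular for compact sets. This yields compact subsets of `B ∩ Kₙ` of measure
arbitrarily close to `μ (B ∩ Kₙ)`.
-/

/-- In a space where `S` is compact and metrizable, a measurable part of `S` is approximated from
inside by compact sets: transfer to the subtype `S` the inner regularity of finite measures on
compact metrizable spaces. -/
lemma exists_isCompact_lt_measure_of_metrizable {Y : Type*} [TopologicalSpace Y]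
    [MeasurableSpace Y] [BorelSpace Y] (μ : Measure Y) [IsFiniteMeasure μ] {S B : Set Y}
    (hS : IsCompact S) (hSm : MeasurableSet S) (hmet : TopologicalSpace.MetrizableSpace S)
    (hB : MeasurableSet B) {r : ENNReal} (hr : r < μ (B ∩ S)) :
    ∃ K, K ⊆ B ∧ IsCompact K ∧ r < μ K := by
  have : CompactSpace S := isCompact_iff_compactSpace.mp hS
  let ν : Measure S := μ.comap (↑)
  have hemb : MeasurableEmbedding ((↑) : S → Y) := MeasurableEmbedding.subtype_coe hSm
  have hν : ∀ t : Set S, ν t = μ ((↑) '' t) := fun t => hemb.comap_apply μ t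
  have : IsFiniteMeasure ν := ⟨by rw [hν]; exact measure_lt_top _ _⟩
  have hr' : r < ν ((↑) ⁻¹' B) := by
    rwa [hν, Subtype.image_preimage_coe, Set.inter_comm]
  obtain ⟨K, hKB, hK, hrK⟩ :=
    (hemb.measurable hB).exists_lt_isCompact_of_ne_top (measure_ne_top ν _) hr'
  exact ⟨(↑) '' K, Set.image_subset_iff.mpr hKB, hK.image continuous_subtype_val, hν K ▸ hrK⟩

/-- The dual `X^*` of a separable Banach space `X`, with its
weak-star topology, is a Radon space: every Borel probability measure on
`(X^*, w^*)` is inner regular on all Borel sets with respect to weak-star compact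
sets. -/
theorem weakDual_of_separable_is_radon_space
    (X : Type*) [NormedAddCommGroup X] [NormedSpace ℝ X]
    [TopologicalSpace.SeparableSpace X]
    (μ : @Measure (WeakDual ℝ X) (borel (WeakDual ℝ X)))
    (hμ : @IsProbabilityMeasure (WeakDual ℝ X) (borel (WeakDual ℝ X)) μ)
    (B : Set (WeakDual ℝ X)) (hB : @MeasurableSet (WeakDual ℝ X) (borel (WeakDual ℝ X)) B) :
    μ B = ⨆ (K : Set (WeakDual ℝ X)) (_ : IsCompact K ∧ K ⊆ B), μ K := by
  let _ : MeasurableSpace (WeakDual ℝ X) := borel _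
  have : BorelSpace (WeakDual ℝ X) := ⟨rfl⟩
  refine le_antisymm ?_ (iSup₂_le fun K hK => measure_mono hK.2)
  let S : ℕ → Set (WeakDual ℝ X) := fun n =>
    WeakDual.toStrongDual ⁻¹' Metric.closedBall (0 : StrongDual ℝ X) n
  have hS : ∀ n, IsCompact (S n) := fun n => WeakDual.isCompact_closedBall 0 n
  have hmono : Monotone fun n => B ∩ S n := fun m n hmn =>
    Set.inter_subset_inter_right _
      (Set.preimage_mono (Metric.closedBall_subset_closedBall (Nat.cast_le.mpr hmn)))
  have hcover : ⋃ n, B ∩ S n = B := by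
    rw [← Set.inter_iUnion, Set.inter_eq_left]
    intro f _
    obtain ⟨n, hn⟩ := exists_nat_ge ‖WeakDual.toStrongDual f‖
    exact Set.mem_iUnion.mpr ⟨n, by simpa [S] using hn⟩
  have hsup : μ B = ⨆ n, μ (B ∩ S n) := by
    conv_lhs => rw [← hcover]
    exact hmono.measure_iUnion
  rw [hsup]
  refine iSup_le fun n => le_of_forall_lt fun r hr => ?_
  obtain ⟨K, hKB, hK, hrK⟩ := exists_isCompact_lt_measure_of_metrizable μ (hS n)
    (hS n).measurableSet (WeakDual.metrizable_of_isCompact ℝ X (S n) (hS n)) hB hr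
  exact hrK.trans_le (le_iSup₂_of_le K ⟨hK, hKB⟩ le_rfl)
end

section
/- Let (T,ℱ,m) be a finite measure space and X a Banach space. For a continuous linear functional J on the Bochner space L¹(m;X), define the X^*-valued set function V_J on ℱ by ⟨f, V_J(A)⟩ := J(f·1_A) for f ∈ X and A ∈ ℱ. Then V_J is a countably additive X^*-valued measure with Lip_m(V_J) < ∞, and the map V : J ↦ V_J is a linear bijection from L¹(m;X)^* onto 𝓜_Lip(m;X^*) satisfying ‖J‖_{L¹(m;X)^*} = Lip_m(V_J); that is, V is a surjective linear isometry onto (𝓜_Lip(m;X^*), Lip_m). -/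
/-!
The dual of `L¹(m;X)` is computed on indicators. Since `‖f·1_A‖ = m(A)‖f‖`, the set function
`V_J` satisfies `|⟨f, V_J(A)⟩| ≤ ‖J‖ m(A) ‖f‖`; it is finitely additive because indicators of
disjoint sets add, and the Lipschitz bound applied to the tails `⋃ i ≥ n, A i`, whose measures
tend to zero, makes it countably additive uniformly over the unit ball of `X`.

For the isometry, a Lipschitz constant `C` of `V_J` satisfies `|J g| ≤ C‖g‖` on multiples of
indicators. The `L¹` norm is additive on functions with disjoint supports, so the bound passes to
simple functions and, by density, to all of `L¹` (`norm_le_of_bound`). Injectivity follows by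
applying this with `C = 0` to a difference.

For surjectivity, a Lipschitz measure `ν` is finitely additive and dominated by a multiple of `m`,
so Mathlib's extension `L1.setToL1` of a dominated additive set function to `L¹` yields a
functional with the prescribed values on indicators.
-/

open MeasureTheory Filter Topology

noncomputable section

variable {T : Type*} [MeasurableSpace T] (m : Measure T) [IsFiniteMeasure m]
variable {X : Type*} [NormedAddCommGroup X] [NormedSpace ℝ X] [CompleteSpace X]

open Classical in
/-- The `X^*`-valued set function `V_J` associated with a continuous linear functional
`J` on `L¹(m;X)`: `⟨f, V_J(A)⟩ = J(f·1_A)`. -/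
def VJ (J : Lp X 1 m →L[ℝ] ℝ) (A : Set T) (f : X) : ℝ :=
  if hA : MeasurableSet A then J (indicatorConstLp 1 hA (measure_ne_top m A) f) else 0

/-- `ν` is a countably additive `X^*`-valued measure that is Lipschitz with respect to
`m` (each `ν A` being a bounded linear functional on `X`). -/
def IsLipMeas (ν : Set T → X → ℝ) : Prop :=
  (∀ f : X, ν ∅ f = 0) ∧
  (∀ A : Set T, IsLinearMap ℝ (ν A)) ∧
  (∃ C : ℝ, ∀ A : Set T, MeasurableSet A → ∀ f : X, |ν A f| ≤ C * (m A).toReal * ‖f‖) ∧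
  (∀ A : ℕ → Set T, (∀ n, MeasurableSet (A n)) → Pairwise (Function.onFun Disjoint A) →
    Tendsto (fun n => ⨆ f : {f : X // ‖f‖ ≤ 1},
        |ν (⋃ i, A i) (f : X) - ∑ i ∈ Finset.range n, ν (A i) (f : X)|)
      atTop (𝓝 0))

/-- The Lipschitz norm `Lip_m(ν)` of an `X^*`-valued measure. -/
def lipNorm (ν : Set T → X → ℝ) : ℝ :=
  sInf {C : ℝ | 0 ≤ C ∧ ∀ A : Set T, MeasurableSet A → ∀ f : X,
    |ν A f| ≤ C * (m A).toReal * ‖f‖}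

theorem VJ_of_measurable (J : Lp X 1 m →L[ℝ] ℝ) {A : Set T} (hA : MeasurableSet A) (f : X) :
    VJ m J A f = J (indicatorConstLp 1 hA (measure_ne_top m A) f) := by
  rw [VJ, dif_pos hA]

theorem VJ_bound (J : Lp X 1 m →L[ℝ] ℝ) {A : Set T} (hA : MeasurableSet A) (f : X) :
    |VJ m J A f| ≤ ‖J‖ * (m A).toReal * ‖f‖ := by
  rw [VJ_of_measurable m J hA, ← Real.norm_eq_abs]
  refine (J.le_opNorm _).trans_eq ?_
  rw [norm_indicatorConstLp one_ne_zero ENNReal.one_ne_top]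
  simp [measureReal_def]
  ring

theorem VJ_union (J : Lp X 1 m →L[ℝ] ℝ) {A B : Set T} (hA : MeasurableSet A)
    (hB : MeasurableSet B) (h : Disjoint A B) (f : X) :
    VJ m J (A ∪ B) f = VJ m J A f + VJ m J B f := by
  rw [VJ_of_measurable m J hA, VJ_of_measurable m J hB, VJ_of_measurable m J (hA.union hB),
    indicatorConstLp_disjoint_union hA hB (measure_ne_top m A) (measure_ne_top m B) h, map_add]

theorem VJ_empty (J : Lp X 1 m →L[ℝ] ℝ) (f : X) : VJ m J ∅ f = 0 := by
  rw [VJ_of_measurable m J MeasurableSet.empty, indicatorConstLp_empty, map_zero]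

theorem VJ_isLinearMap (J : Lp X 1 m →L[ℝ] ℝ) (A : Set T) : IsLinearMap ℝ (VJ m J A) := by
  by_cases hA : MeasurableSet A
  · refine ⟨fun f g => ?_, fun c f => ?_⟩
    · rw [VJ_of_measurable m J hA, VJ_of_measurable m J hA, VJ_of_measurable m J hA,
        ← indicatorConstLp_add, map_add]
    · rw [VJ_of_measurable m J hA, VJ_of_measurable m J hA, ← map_smul]
      congr 1
      simp_rw [indicatorConstLp, ← MemLp.toLp_const_smul]
      congr 1
      exact Set.indicator_const_smul A c fun _ => f
  · constructor <;> intros <;> simp [VJ, hA]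

theorem VJ_iUnion (J : Lp X 1 m →L[ℝ] ℝ) {A : ℕ → Set T} (hA : ∀ n, MeasurableSet (A n))
    (hd : Pairwise (Function.onFun Disjoint A)) (f : X) (n : ℕ) :
    VJ m J (⋃ i, A i) f =
      ∑ i ∈ Finset.range n, VJ m J (A i) f + VJ m J (⋃ i ≥ n, A i) f := by
  induction n with
  | zero => simp
  | succ n ih =>
    have hsplit : (⋃ i ≥ n, A i) = A n ∪ ⋃ i ≥ n + 1, A i := by
      ext x
      simp only [Set.mem_iUnion, Set.mem_union, exists_prop, ge_iff_le]
      constructor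
      · rintro ⟨i, hi, hx⟩
        rcases hi.eq_or_lt with rfl | hi
        · exact Or.inl hx
        · exact Or.inr ⟨i, hi, hx⟩
      · rintro (hx | ⟨i, hi, hx⟩)
        · exact ⟨n, le_rfl, hx⟩
        · exact ⟨i, by omega, hx⟩
    have hdis : Disjoint (A n) (⋃ i ≥ n + 1, A i) := by
      simp only [Set.disjoint_iUnion_right]
      exact fun i hi => hd (by omega)
    rw [ih, hsplit, VJ_union m J (hA n)
      (MeasurableSet.iUnion fun i => MeasurableSet.iUnion fun _ => hA i) hdis,
      Finset.sum_range_succ, add_assoc]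

theorem VJ_isLipMeas (J : Lp X 1 m →L[ℝ] ℝ) : IsLipMeas m (VJ m J) := by
  refine ⟨VJ_empty m J, VJ_isLinearMap m J, ⟨‖J‖, fun A hA f => VJ_bound m J hA f⟩, ?_⟩
  intro A hA hd
  have htail : Tendsto (fun n => ‖J‖ * (m (⋃ i ≥ n, A i)).toReal) atTop (𝓝 0) := by
    have h := tendsto_measure_biUnion_Ici_zero_of_pairwise_disjoint (μ := m)
      (fun i => (hA i).nullMeasurableSet) hd
    have h' := (ENNReal.tendsto_toReal ENNReal.zero_ne_top).comp h
    simpa using h'.const_mul ‖J‖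
  refine squeeze_zero (fun n => Real.iSup_nonneg fun f => abs_nonneg _) (fun n => ?_) htail
  refine Real.iSup_le (fun f => ?_) (by positivity)
  rw [VJ_iUnion m J hA hd f n, add_sub_cancel_left]
  refine (VJ_bound m J
    (MeasurableSet.iUnion fun i => MeasurableSet.iUnion fun _ => hA i) f).trans ?_
  exact mul_le_of_le_one_right (by positivity) f.2

/-- A Lipschitz constant of `V_J` bounds `‖J‖`: the bound holds on indicators, is stable under
sums with disjoint supports because the `L¹` norm is additive there, and is a closed condition. -/
theorem norm_le_of_bound (J : Lp X 1 m →L[ℝ] ℝ) {C : ℝ} (hC : 0 ≤ C)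
    (h : ∀ A : Set T, MeasurableSet A → ∀ f : X, |VJ m J A f| ≤ C * (m A).toReal * ‖f‖) :
    ‖J‖ ≤ C := by
  refine J.opNorm_le_bound hC fun g => ?_
  refine Lp.induction ENNReal.one_ne_top (fun g => ‖J g‖ ≤ C * ‖g‖) ?_ ?_ ?_ g
  · intro c s hs hμs
    have := h s hs c
    rw [VJ_of_measurable m J hs] at this
    rw [Lp.simpleFunc.coe_indicatorConst, norm_indicatorConstLp one_ne_zero ENNReal.one_ne_top]
    refine this.trans_eq ?_
    simp [measureReal_def]
    ring
  · intro f g hf hg hfg hJf hJg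
    have hnorm : ‖hf.toLp f + hg.toLp g‖ = ‖hf.toLp f‖ + ‖hg.toLp g‖ := by
      have hfi := memLp_one_iff_integrable.1 hf
      have hgi := memLp_one_iff_integrable.1 hg
      have e1 := L1.norm_of_fun_eq_integral_norm hfi
      have e2 := L1.norm_of_fun_eq_integral_norm hgi
      have e3 := L1.norm_of_fun_eq_integral_norm (hfi.add hgi)
      rw [← MemLp.toLp_add]
      refine e3.trans (Eq.trans ?_ (congrArg₂ (· + ·) e1 e2).symm)
      rw [← integral_add hfi.norm hgi.norm]
      refine integral_congr_ae (Eventually.of_forall fun t => ?_)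
      by_cases hft : f t = 0
      · simp [hft]
      · have : g t = 0 := by
          by_contra hgt
          exact Set.disjoint_left.1 hfg hft hgt
        simp [this]
    rw [map_add, hnorm, mul_add]
    exact (norm_add_le _ _).trans (add_le_add hJf hJg)
  · exact isClosed_le (by fun_prop) (by fun_prop)

variable {m} in
/-- Countable additivity applied to the sequence `A, B, ∅, ∅, …`. The supremum over the unit ball
vanishes, and the Lipschitz bound makes the family bounded, so every term of it vanishes; vectors
outside the ball are reached by homogeneity. -/
theorem IsLipMeas.union {ν : Set T → X → ℝ} (hν : IsLipMeas m ν) {A B : Set T}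
    (hA : MeasurableSet A) (hB : MeasurableSet B) (hAB : Disjoint A B) (f : X) :
    ν (A ∪ B) f = ν A f + ν B f := by
  obtain ⟨h0, hlin, ⟨C, hC⟩, hadd⟩ := hν
  let S : ℕ → Set T := fun n => if n = 0 then A else if n = 1 then B else ∅
  have hS : ∀ n, MeasurableSet (S n) := by
    intro n
    simp only [S]
    split_ifs <;> simp [hA, hB]
  have hd : Pairwise (Function.onFun Disjoint S) := by
    intro i j hij
    simp only [Function.onFun, S]
    split_ifs <;> first | omega | simp [hAB.symm]
  have hU : ⋃ i, S i = A ∪ B := by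
    ext x
    simp only [Set.mem_iUnion, Set.mem_union, S]
    constructor
    · rintro ⟨i, hi⟩
      split_ifs at hi
      · exact Or.inl hi
      · exact Or.inr hi
      · exact hi.elim
    · rintro (hx | hx)
      · exact ⟨0, by simpa using hx⟩
      · exact ⟨1, by simpa using hx⟩
  have hsum : ∀ (n : ℕ) (g : X), ∑ i ∈ Finset.range (n + 2), ν (S i) g = ν A g + ν B g := by
    intro n g
    rw [add_comm n 2, Finset.sum_range_add, Finset.sum_eq_zero (s := Finset.range n)]
    · simp [Finset.sum_range_succ, S]
    · intro i _
      have : S (2 + i) = ∅ := by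
        simp only [S]
        rw [if_neg (by omega), if_neg (by omega)]
      rw [this, h0]
  have hsup : ⨆ g : {g : X // ‖g‖ ≤ 1}, |ν (A ∪ B) (g : X) - (ν A (g : X) + ν B (g : X))| = 0 := by
    have h1 := (tendsto_add_atTop_iff_nat 2).2 (hadd S hS hd)
    simp only [hsum, hU] at h1
    exact tendsto_nhds_unique tendsto_const_nhds h1
  have hbdd : BddAbove (Set.range fun g : {g : X // ‖g‖ ≤ 1} =>
      |ν (A ∪ B) (g : X) - (ν A (g : X) + ν B (g : X))|) := by
    -- `C` may be negative, so its absolute value is used.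
    have hb : ∀ D : Set T, MeasurableSet D → ∀ g : X, ‖g‖ ≤ 1 → |ν D g| ≤ |C| * (m D).toReal := by
      intro D hD g hg
      refine (hC D hD g).trans ?_
      calc C * (m D).toReal * ‖g‖ ≤ |C| * (m D).toReal * ‖g‖ := by
            gcongr
            exact le_abs_self C
        _ ≤ _ := mul_le_of_le_one_right (by positivity) hg
    refine ⟨|C| * (m (A ∪ B)).toReal + (|C| * (m A).toReal + |C| * (m B).toReal), ?_⟩
    rintro _ ⟨g, rfl⟩
    refine (abs_sub _ _).trans (add_le_add (hb _ (hA.union hB) g g.2) ?_)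
    exact (abs_add_le _ _).trans (add_le_add (hb _ hA g g.2) (hb _ hB g g.2))
  have hball : ∀ g : X, ‖g‖ ≤ 1 → ν (A ∪ B) g = ν A g + ν B g := by
    intro g hg
    have h1 := le_ciSup hbdd ⟨g, hg⟩
    rw [hsup] at h1
    exact sub_eq_zero.1 (abs_nonpos_iff.1 h1)
  by_cases hf : f = 0
  · subst hf
    simp [(hlin _).map_zero]
  · have hf' : ‖f‖ ≠ 0 := norm_ne_zero_iff.2 hf
    have h1 := hball (‖f‖⁻¹ • f) (by rw [norm_smul, norm_inv, norm_norm, inv_mul_cancel₀ hf'])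
    simp only [(hlin _).map_smul, smul_eq_mul, ← mul_add] at h1
    exact mul_left_cancel₀ (inv_ne_zero hf') h1

open Classical in
theorem exists_VJ_eq {ν : Set T → X → ℝ} (hν : IsLipMeas m ν) :
    ∃ J : Lp X 1 m →L[ℝ] ℝ, ∀ A : Set T, MeasurableSet A → ∀ f : X, ν A f = VJ m J A f := by
  obtain ⟨C, hC⟩ := hν.2.2.1
  -- Nothing bounds `ν A` for non-measurable `A`, so those sets are sent to `0`.
  let U : Set T → X →L[ℝ] ℝ := fun A =>
    if hA : MeasurableSet A then
      LinearMap.mkContinuous (IsLinearMap.mk' (ν A) (hν.2.1 A)) (C * (m A).toReal)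
        (fun f => hC A hA f)
    else 0
  have hU : ∀ A, MeasurableSet A → ∀ f, U A f = ν A f := by
    intro A hA f
    simp only [U, dif_pos hA]
    rfl
  have hdom : DominatedFinMeasAdditive m U |C| := by
    refine ⟨fun s t hs ht _ _ hst => ?_, fun s hs _ => ?_⟩
    · ext f
      rw [add_apply, hU _ (hs.union ht), hU _ hs, hU _ ht, hν.union hs ht hst]
    · refine (U s).opNorm_le_bound (by positivity) fun f => ?_
      rw [hU s hs]
      refine (hC s hs f).trans ?_
      rw [measureReal_def]
      gcongr
      exact le_abs_self C
  refine ⟨L1.setToL1 hdom, fun A hA f => ?_⟩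
  rw [VJ_of_measurable m _ hA, L1.setToL1_indicatorConstLp, hU A hA]

/-- For a finite measure space `(T,ℱ,m)` and a Banach space `X`, the
map `V : J ↦ V_J`, `⟨f, V_J A⟩ := J (f·1_A)`, is a linear bijection from the dual of the
Bochner space `L¹(m;X)` onto the `m`-Lipschitz `X^*`-valued measures, and it is an
isometry: `‖J‖ = Lip_m(V_J)`. -/
theorem dual_L1_eq_lipschitz_vector_measures :
    -- well-defined and isometric
    (∀ J : Lp X 1 m →L[ℝ] ℝ, IsLipMeas m (VJ m J) ∧ ‖J‖ = lipNorm m (VJ m J)) ∧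
    -- linear
    (∀ (J₁ J₂ : Lp X 1 m →L[ℝ] ℝ) (A : Set T) (f : X),
      VJ m (J₁ + J₂) A f = VJ m J₁ A f + VJ m J₂ A f) ∧
    (∀ (c : ℝ) (J : Lp X 1 m →L[ℝ] ℝ) (A : Set T) (f : X),
      VJ m (c • J) A f = c * VJ m J A f) ∧
    -- injective
    (∀ J₁ J₂ : Lp X 1 m →L[ℝ] ℝ,
      (∀ (A : Set T) (f : X), VJ m J₁ A f = VJ m J₂ A f) → J₁ = J₂) ∧
    -- surjective
    (∀ ν : Set T → X → ℝ, IsLipMeas m ν →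
      ∃ J : Lp X 1 m →L[ℝ] ℝ, ∀ A : Set T, MeasurableSet A → ∀ f : X,
        ν A f = VJ m J A f) := by
  have hlin_add : ∀ (J₁ J₂ : Lp X 1 m →L[ℝ] ℝ) (A : Set T) (f : X),
      VJ m (J₁ + J₂) A f = VJ m J₁ A f + VJ m J₂ A f := by
    intro J₁ J₂ A f
    by_cases hA : MeasurableSet A <;> simp [VJ, hA]
  have hlin_smul : ∀ (c : ℝ) (J : Lp X 1 m →L[ℝ] ℝ) (A : Set T) (f : X),
      VJ m (c • J) A f = c * VJ m J A f := by
    intro c J A f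
    by_cases hA : MeasurableSet A <;> simp [VJ, hA]
  refine ⟨fun J => ⟨VJ_isLipMeas m J, ?_⟩, hlin_add, hlin_smul, ?_, fun ν hν => exists_VJ_eq m hν⟩
  · have hmem : ‖J‖ ∈ {C : ℝ | 0 ≤ C ∧ ∀ A : Set T, MeasurableSet A → ∀ f : X,
        |VJ m J A f| ≤ C * (m A).toReal * ‖f‖} :=
      ⟨norm_nonneg J, fun A hA f => VJ_bound m J hA f⟩
    exact le_antisymm (le_csInf ⟨_, hmem⟩ fun C hC => norm_le_of_bound m J hC.1 hC.2)
      (csInf_le ⟨0, fun C hC => hC.1⟩ hmem)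
  · intro J₁ J₂ h
    have hzero : ∀ A f, VJ m (J₁ + (-1 : ℝ) • J₂) A f = 0 := by
      intro A f
      rw [hlin_add, hlin_smul, h]
      ring
    have hnorm := norm_le_of_bound m (J₁ + (-1 : ℝ) • J₂) le_rfl
      (fun A _ f => by simp [hzero A f])
    rw [norm_le_zero_iff] at hnorm
    ext g
    have hg : J₁ g + (-1 : ℝ) * J₂ g = 0 := DFunLike.congr_fun hnorm g
    linarith
end
end

section
/- Let (T,ℱ,m) be a complete finite measure space and let X be a separable Banach space. Then for every continuous linear functional J on the Bochner space L¹(m;X) there exists a weak-star measurable map μ : T → X^* with ess sup_{t∈T} ‖μ_t‖_{X^*} < ∞ such that J(f) = ∫_T ⟨f_t, μ_t⟩ dm(t) for every f ∈ L¹(m;X), and ‖J‖_{L¹(m;X)^*} = ess sup_{t∈T} ‖μ_t‖_{X^*}. Moreover μ is unique up to m-almost everywhere equality: if ν : T → X^* is any weak-star measurable essentially bounded map representing J in the same way, then μ_t = ν_t for m-almost every t ∈ T. -/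
open MeasureTheory Filter Topology

/-!
For each `x : X`, Radon-Nikodym applied to `s ↦ J (1_s x)` gives a density `g x : T → ℝ` with
`|g x| ≤ ‖J‖ ‖x‖` almost everywhere (`exists_density`). Discarding one null set, `x ↦ g x t` is
additive and bounded by `‖J‖` on a countable dense subgroup of `X`, so it extends by continuity to
a functional `μ t` with `‖μ t‖ ≤ ‖J‖` (`exists_clm_extension`, `exists_measurable_family`).

The functionals `J` and `f ↦ ∫ μ t (f t)` are continuous on `L¹(m;X)` and agree on indicators
`1_s d` with `d` in the dense subgroup, hence everywhere. The bound
`|∫ μ t (f t)| ≤ (ess sup ‖μ‖) ‖f‖` gives the remaining inequality between norms. Testing two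
representatives on `1_s x` shows that they agree almost everywhere at each `x`, hence almost
everywhere on a countable dense set of `x` simultaneously.
-/

/-- For fixed `x`, the set function `s ↦ J (1_s x)` is additive and dominated by `‖J‖ ‖x‖ m`, hence a
signed measure absolutely continuous with respect to `m`; its Radon-Nikodym derivative is the
density `g`. -/
lemma exists_density {T : Type*} [MeasurableSpace T] (m : Measure T) [IsFiniteMeasure m]
    {X : Type*} [NormedAddCommGroup X] [NormedSpace ℝ X]
    (J : Lp X 1 m →L[ℝ] ℝ) (x : X) :
    ∃ g : T → ℝ, Measurable g ∧ Integrable g m ∧ (∀ᵐ t ∂m, |g t| ≤ ‖J‖ * ‖x‖) ∧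
      ∀ s (hs : MeasurableSet s),
        J (indicatorConstLp 1 hs (measure_ne_top m s) x) = ∫ t in s, g t ∂m := by
  classical
  have hJ : ∀ s (hs : MeasurableSet s),
      |J (indicatorConstLp 1 hs (measure_ne_top m s) x)| ≤ ‖J‖ * ‖x‖ * m.real s := by
    intro s hs
    refine (J.le_opNorm _).trans ?_
    rw [norm_indicatorConstLp one_ne_zero ENNReal.one_ne_top]
    simp [mul_assoc]
  set C : ℝ := ‖J‖ * ‖x‖ with hC
  have hC0 : 0 ≤ C := by positivity
  let F : Set T → ℝ := fun s =>
    if hs : MeasurableSet s then J (indicatorConstLp 1 hs (measure_ne_top m s) x) else 0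
  have hF : ∀ s (hs : MeasurableSet s),
      F s = J (indicatorConstLp 1 hs (measure_ne_top m s) x) := fun s hs => dif_pos hs
  let V : SignedMeasure T := VectorMeasure.of_additive_of_le_measure (μ := C.toNNReal • m) F
    (by
      intro s
      by_cases hs : MeasurableSet s
      · rw [hF s hs, Real.enorm_eq_ofReal_abs]
        refine (ENNReal.ofReal_le_ofReal (hJ s hs)).trans ?_
        rw [ENNReal.ofReal_mul hC0, Measure.smul_apply, ofReal_measureReal]
        rfl
      · simp [F, hs])
    (by
      intro s t hs ht hst
      rw [hF s hs, hF t ht, hF _ (hs.union ht), ← map_add,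
        indicatorConstLp_disjoint_union hs ht (measure_ne_top m s) (measure_ne_top m t) hst])
    (fun s hs => dif_neg hs)
  have hV : ∀ s (hs : MeasurableSet s),
      V s = J (indicatorConstLp 1 hs (measure_ne_top m s) x) := hF
  have hac : V ≪ᵥ m.toENNRealVectorMeasure := by
    refine VectorMeasure.AbsolutelyContinuous.mk fun s hs h0 => ?_
    rw [Measure.toENNRealVectorMeasure_apply_measurable hs] at h0
    have := hJ s hs
    rw [← hV s hs, measureReal_def, h0] at this
    simpa using this
  have hint := SignedMeasure.integrable_rnDeriv V m
  have hrep : ∀ s (hs : MeasurableSet s),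
      J (indicatorConstLp 1 hs (measure_ne_top m s) x) = ∫ t in s, V.rnDeriv m t ∂m := by
    intro s hs
    rw [← hV s hs, ← withDensityᵥ_apply hint hs, SignedMeasure.withDensityᵥ_rnDeriv_eq V m hac]
  refine ⟨V.rnDeriv m, SignedMeasure.measurable_rnDeriv V m, hint, ?_, hrep⟩
  have h1 : V.rnDeriv m ≤ᵐ[m] fun _ => C := by
    refine ae_le_of_forall_setIntegral_le hint (integrable_const _) fun s hs _ => ?_
    rw [← hrep s hs, setIntegral_const, smul_eq_mul, mul_comm]
    exact (abs_le.1 (hJ s hs)).2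
  have h2 : (fun _ => -C) ≤ᵐ[m] V.rnDeriv m := by
    refine ae_le_of_forall_setIntegral_le (integrable_const _) hint fun s hs _ => ?_
    rw [← hrep s hs, setIntegral_const, smul_eq_mul, mul_comm, neg_mul]
    exact (abs_le.1 (hJ s hs)).1
  filter_upwards [h1, h2] with t ht1 ht2
  exact abs_le.2 ⟨ht2, ht1⟩

/-- A bounded additive functional on a dense subgroup extends to a continuous additive functional on
the whole space, which is automatically `ℝ`-linear. -/
lemma exists_clm_extension {X : Type*} [NormedAddCommGroup X] [NormedSpace ℝ X]
    (D : Submodule ℤ X) (hD : Dense (D : Set X)) (g : D →+ ℝ) (C : ℝ) (hC : 0 ≤ C)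
    (hg : ∀ d, |g d| ≤ C * ‖(d : X)‖) :
    ∃ L : X →L[ℝ] ℝ, (∀ d : D, L d = g d) ∧ ‖L‖ ≤ C := by
  have hgc : Continuous g := AddMonoidHomClass.continuous_of_bound g C hg
  let f : D →L[ℤ] ℝ := ⟨g.toIntLinearMap, hgc⟩
  have hd : DenseRange D.subtypeL := by simpa [DenseRange] using hD
  let L : X →L[ℤ] ℝ := f.extend D.subtypeL
  have hL : ∀ d : D, L d = g d := fun d =>
    f.extend_eq hd isUniformEmbedding_subtype_val.isUniformInducing d
  refine ⟨(L : X →ₗ[ℤ] ℝ).toAddMonoidHom.toRealLinearMap L.continuous, hL, ?_⟩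
  refine ContinuousLinearMap.opNorm_le_bound _ hC fun x => ?_
  change ‖L x‖ ≤ C * ‖x‖
  refine hd.induction_on x (isClosed_le (by fun_prop) (by fun_prop)) fun d => ?_
  exact (congrArg norm (hL d)).trans_le (hg d)

/-- Measurability of `t ↦ μ t (f t)` holds because `(x, t) ↦ μ t x` is a Carathéodory function on the
second countable space `X`, hence jointly measurable. -/
lemma integrable_pairing {T : Type*} [MeasurableSpace T] {m : Measure T}
    {X : Type*} [NormedAddCommGroup X] [NormedSpace ℝ X] [TopologicalSpace.SeparableSpace X]
    {μ : T → X →L[ℝ] ℝ} (hμ : ∀ f : X, Measurable fun t => μ t f)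
    {C : ℝ} (hC : ∀ᵐ t ∂m, ‖μ t‖ ≤ C) {f : T → X} (hf : Integrable f m) :
    Integrable (fun t => μ t (f t)) m := by
  borelize X
  have := UniformSpace.secondCountable_of_separable X
  have hu : Measurable (Function.uncurry fun (x : X) (t : T) => μ t x) :=
    measurable_uncurry_of_continuous_of_measurable (fun t => (μ t).continuous) hμ
  have hm : AEMeasurable (fun t => μ t (f t)) m :=
    hu.comp_aemeasurable (hf.aestronglyMeasurable.aemeasurable.prodMk aemeasurable_id)
  refine (hf.norm.const_mul C).mono' hm.aestronglyMeasurable ?_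
  filter_upwards [hC] with t ht
  exact ((μ t).le_opNorm _).trans (by gcongr)

lemma abs_integral_pairing_le {T : Type*} [MeasurableSpace T] {m : Measure T}
    {X : Type*} [NormedAddCommGroup X] [NormedSpace ℝ X]
    {μ : T → X →L[ℝ] ℝ} {C : ℝ} (hC : ∀ᵐ t ∂m, ‖μ t‖ ≤ C) (f : Lp X 1 m) :
    ‖∫ t, μ t (f t) ∂m‖ ≤ C * ‖f‖ := by
  rw [L1.norm_eq_integral_norm, ← integral_const_mul]
  refine norm_integral_le_of_norm_le ((L1.integrable_coeFn f).norm.const_mul C) ?_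
  filter_upwards [hC] with t ht
  exact ((μ t).le_opNorm _).trans (by gcongr)

lemma integral_pairing_indicator {T : Type*} [MeasurableSpace T] {m : Measure T}
    [IsFiniteMeasure m] {X : Type*} [NormedAddCommGroup X] [NormedSpace ℝ X]
    (μ : T → X →L[ℝ] ℝ) {s : Set T} (hs : MeasurableSet s) (x : X) :
    ∫ t, μ t (indicatorConstLp 1 hs (measure_ne_top m s) x t) ∂m = ∫ t in s, μ t x ∂m := by
  rw [← integral_indicator hs]
  refine integral_congr_ae ?_
  filter_upwards [indicatorConstLp_coeFn (p := 1) (hs := hs) (hμs := measure_ne_top m s) (c := x)]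
    with t ht
  rw [ht]
  by_cases h : t ∈ s <;> simp [h]

/-- Gluing of the scalar densities. The additivity and the norm bound of `d ↦ g d t` on a countable
dense subgroup `D` involve countably many almost-everywhere conditions, so they hold simultaneously
off a measurable null set `G`; there `d ↦ g d t` extends to an element of the dual, and `μ` is set
to zero on `G`. -/
lemma exists_measurable_family {T : Type*} [MeasurableSpace T] (m : Measure T)
    [IsFiniteMeasure m] {X : Type*} [NormedAddCommGroup X] [NormedSpace ℝ X]
    [TopologicalSpace.SeparableSpace X] (J : Lp X 1 m →L[ℝ] ℝ) :
    ∃ μ : T → X →L[ℝ] ℝ, (∀ x, Measurable fun t => μ t x) ∧ (∀ t, ‖μ t‖ ≤ ‖J‖) ∧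
      ∃ D : Set X, Dense D ∧ ∀ d ∈ D, ∀ s (hs : MeasurableSet s),
        J (indicatorConstLp 1 hs (measure_ne_top m s) d) = ∫ t in s, μ t d ∂m := by
  classical
  choose g hgm hgi hgb hgr using exists_density m J
  let D : Submodule ℤ X := (Finsupp.linearCombination ℤ (TopologicalSpace.denseSeq X)).range
  have hDc : Countable D := (Set.countable_range
    (Finsupp.linearCombination ℤ (TopologicalSpace.denseSeq X))).to_subtype
  have hDd : Dense (D : Set X) := by
    refine (TopologicalSpace.denseRange_denseSeq X).mono ?_
    rintro _ ⟨n, rfl⟩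
    exact ⟨Finsupp.single n 1, by simp⟩
  have hadd : ∀ x y, ∀ᵐ t ∂m, g (x + y) t = g x t + g y t := by
    intro x y
    refine Integrable.ae_eq_of_forall_setIntegral_eq _ _ (hgi _) ((hgi x).add (hgi y))
      fun s hs _ => ?_
    rw [integral_add (hgi x).integrableOn (hgi y).integrableOn, ← hgr _ s hs, ← hgr _ s hs,
      ← hgr _ s hs, ← map_add, indicatorConstLp_add]
  have hgood : ∀ᵐ t ∂m, (∀ x y : D, g (x + y) t = g x t + g y t) ∧
      ∀ x : D, |g x t| ≤ ‖J‖ * ‖(x : X)‖ := by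
    refine Eventually.and ?_ (ae_all_iff.2 fun x => hgb x)
    exact ae_all_iff.2 fun x => ae_all_iff.2 fun y => hadd x y
  obtain ⟨G, hGsub, hGm, hG0⟩ := exists_measurable_superset_of_null (ae_iff.1 hgood)
  have hL : ∀ t, ∃ L : X →L[ℝ] ℝ, (∀ d : D, L d = if t ∈ G then 0 else g d t) ∧ ‖L‖ ≤ ‖J‖ := by
    intro t
    by_cases ht : t ∈ G
    · exact ⟨0, by simp [ht], by simp⟩
    · have h := not_not.1 fun h => ht (hGsub h)
      obtain ⟨L, hL, hLn⟩ := exists_clm_extension D hDd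
        (AddMonoidHom.mk' (fun d : D => g d t) h.1) ‖J‖ (norm_nonneg _) h.2
      exact ⟨L, fun d => by simp [hL, ht], hLn⟩
  choose μ hμ hμn using hL
  have hmeasD : ∀ d : D, Measurable fun t => μ t d := by
    intro d
    simp only [hμ]
    exact Measurable.ite hGm measurable_const (hgm d)
  refine ⟨μ, fun x => ?_, hμn, D, hDd, fun d hd s hs => ?_⟩
  · obtain ⟨u, hu, hux⟩ := mem_closure_iff_seq_limit.1 (hDd x)
    refine measurable_of_tendsto_metrizable (fun n => hmeasD ⟨u n, hu n⟩) ?_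
    exact tendsto_pi_nhds.2 fun t => ((μ t).continuous.tendsto x).comp hux
  · rw [hgr d s hs]
    refine integral_congr_ae (ae_restrict_of_ae ?_)
    filter_upwards [measure_eq_zero_iff_ae_notMem.1 hG0] with t ht
    exact ((hμ t ⟨d, hd⟩).trans (if_neg ht)).symm

/-- Let `(T,ℱ,m)` be a complete finite measure space and `X` a
separable Banach space.  Every continuous linear functional `J` on the Bochner space
`L¹(m;X)` is represented by a weak-star measurable essentially bounded map
`μ : T → X^*`:  `J(f) = ∫ ⟨f_t, μ_t⟩ dm(t)` for all `f ∈ L¹(m;X)`, with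
`‖J‖ = ess sup_t ‖μ_t‖`, and `μ` is unique up to `m`-a.e. equality. -/
theorem dual_L1_as_weakStar_Linfty
    (T : Type*) [MeasurableSpace T] (m : Measure T) [IsFiniteMeasure m]
    [m.IsComplete]
    (X : Type*) [NormedAddCommGroup X] [NormedSpace ℝ X] [CompleteSpace X]
    [TopologicalSpace.SeparableSpace X]
    (J : Lp X 1 m →L[ℝ] ℝ) :
    ∃ μ : T → X →L[ℝ] ℝ,
      (∀ f : X, Measurable fun t => μ t f) ∧
      (∃ C : ℝ, ∀ᵐ t ∂m, ‖μ t‖ ≤ C) ∧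
      (∀ f : Lp X 1 m, J f = ∫ t, μ t (f t) ∂m) ∧
      ‖J‖ = essSup (fun t => ‖μ t‖) m ∧
      (∀ ν : T → X →L[ℝ] ℝ,
        (∀ f : X, Measurable fun t => ν t f) →
        (∃ C : ℝ, ∀ᵐ t ∂m, ‖ν t‖ ≤ C) →
        (∀ f : Lp X 1 m, J f = ∫ t, ν t (f t) ∂m) →
        ∀ᵐ t ∂m, μ t = ν t) := by
  obtain ⟨μ, hμm, hμb, D, hD, hDr⟩ := exists_measurable_family m J
  have hμa : ∀ᵐ t ∂m, ‖μ t‖ ≤ ‖J‖ := ae_of_all _ hμb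
  have hI : ∀ f : Lp X 1 m, Integrable (fun t => μ t (f t)) m :=
    fun f => integrable_pairing hμm hμa (L1.integrable_coeFn f)
  let K : Lp X 1 m →L[ℝ] ℝ := LinearMap.mkContinuous
    { toFun := fun f => ∫ t, μ t (f t) ∂m
      map_add' := fun f h => by
        rw [← integral_add (hI f) (hI h)]
        refine integral_congr_ae ?_
        filter_upwards [Lp.coeFn_add f h] with t ht
        rw [ht, Pi.add_apply, map_add]
      map_smul' := fun c f => by
        rw [RingHom.id_apply, ← integral_smul]
        refine integral_congr_ae ?_
        filter_upwards [Lp.coeFn_smul c f] with t ht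
        rw [ht, Pi.smul_apply, map_smul] } ‖J‖ (abs_integral_pairing_le hμa)
  have hK : ∀ f, K f = ∫ t, μ t (f t) ∂m := fun f => rfl
  have hcont : ∀ {s : Set T} (hs : MeasurableSet s),
      Continuous fun x : X => indicatorConstLp 1 hs (measure_ne_top m s) x := by
    intro s hs
    have hLip : LipschitzWith (m.real s).toNNReal
        fun x : X => indicatorConstLp 1 hs (measure_ne_top m s) x := by
      refine LipschitzWith.of_dist_le_mul fun x y => ?_
      rw [dist_eq_norm, dist_eq_norm, indicatorConstLp_sub,
        norm_indicatorConstLp one_ne_zero ENNReal.one_ne_top]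
      simp [mul_comm]
    exact hLip.continuous
  have hJK : ∀ f, J f = K f := by
    refine Lp.induction ENNReal.one_ne_top _ ?_ ?_ (isClosed_eq J.continuous K.continuous)
    · intro c s hs _
      rw [Lp.simpleFunc.coe_indicatorConst]
      refine congrFun (Continuous.ext_on hD (J.continuous.comp (hcont hs))
        (K.continuous.comp (hcont hs)) fun d hd => ?_) c
      exact (hDr d hd s hs).trans (integral_pairing_indicator μ hs d).symm
    · intro f h hf hh _ h1 h2
      rw [map_add, map_add, h1, h2]
  -- For `m = 0` the essential supremum in `ℝ` is the junk value `sInf univ = 0`.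
  have hzero : m = 0 → essSup (fun t => ‖μ t‖) m = 0 := by
    rintro rfl
    simp [essSup, limsup_eq]
  refine ⟨μ, hμm, ⟨‖J‖, hμa⟩, hJK, le_antisymm ?_ ?_, ?_⟩
  · have hbdd : IsBoundedUnder (· ≤ ·) (ae m) fun t => ‖μ t‖ := ⟨‖J‖, hμa⟩
    have hess : 0 ≤ essSup (fun t => ‖μ t‖) m := by
      by_cases hm : m = 0
      · exact (hzero hm).ge
      · have : (ae m).NeBot := ae_neBot.2 hm
        obtain ⟨t, ht⟩ := (ae_le_essSup hbdd).exists
        exact (norm_nonneg _).trans ht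
    refine J.opNorm_le_bound hess fun f => ?_
    rw [hJK f]
    exact abs_integral_pairing_le (ae_le_essSup hbdd) f
  · by_cases hm : m = 0
    · exact (hzero hm).trans_le (norm_nonneg _)
    · have : (ae m).NeBot := ae_neBot.2 hm
      have hlow : IsBoundedUnder (· ≥ ·) (ae m) fun t => ‖μ t‖ :=
        ⟨0, ae_of_all _ fun t => norm_nonneg _⟩
      exact essSup_le_of_ae_le _ hμa hlow.isCoboundedUnder_flip
  · rintro ν hνm ⟨C, hC⟩ hν
    have hx : ∀ x : X, ∀ᵐ t ∂m, μ t x = ν t x := by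
      intro x
      refine Integrable.ae_eq_of_forall_setIntegral_eq _ _
        (integrable_pairing hμm hμa (integrable_const x))
        (integrable_pairing hνm hC (integrable_const x)) fun s hs _ => ?_
      rw [← integral_pairing_indicator μ hs, ← integral_pairing_indicator ν hs, ← hν]
      exact (hJK _).symm
    filter_upwards [ae_all_iff.2 fun n => hx (TopologicalSpace.denseSeq X n)] with t ht
    refine ContinuousLinearMap.coeFn_injective (Continuous.ext_on
      (TopologicalSpace.denseRange_denseSeq X) (μ t).continuous (ν t).continuous ?_)
    rintro _ ⟨n, rfl⟩
    exact ht n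
end

section
/- Let M be a completely regular submetrizable topological space and let 𝓜 be a uniformly tight family of tight Borel probability measures on M. Then 𝓜 is sequentially relatively compact for the weak topology: every sequence (μ_n) in 𝓜 admits a subsequence (μ_{k_n}) and a tight Borel probability measure μ on M such that ∫ f dμ_{k_n} → ∫ f dμ for every bounded continuous function f : M → ℝ. -/
/-!
Fix increasing compact sets `K n` and `u n → 0` such that every measure of the family gives mass
at most `u n` to the complement of `K n`. Prokhorov's theorem in Mathlib, valid on any Hausdorff
space, says that the set `S` of all probability measures with these bounds is compact for the weak
topology. What is left is to pass from compactness to sequential compactness, and this is where the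
continuous metric enters.

By compactness of the `K n` there is a countable set `D` which is `d`-dense in `⋃ n, K n`, so
`J x = (d x p)_{p ∈ D}` is a continuous map from `M` to the separable metrizable space `D → ℝ`
that is injective on `⋃ n, K n` (`exists_continuous_injOn`). A measure carried by `⋃ n, K n` is
determined by its push-forward under `J`: up to a null set, a closed set `F` is the preimage of the
σ-compact set `J (F ∩ ⋃ n, K n)` (`measure_eq_of_map_eq`). So push-forward embeds the compact space
`S` into the metrizable space of probability measures on `D → ℝ`; hence `S` is metrizable, and
therefore sequentially compact.
-/

open MeasureTheory Filter Topology

/-- A Borel probability measure is tight if the total mass is the supremum of the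
masses of compact sets. -/
def IsTightMeasure {M : Type*} [TopologicalSpace M] [MeasurableSpace M]
    (μ : Measure M) : Prop :=
  μ Set.univ = ⨆ (K : Set M) (_ : IsCompact K), μ K

/-- A topological space is submetrizable if it admits a continuous metric. -/
def Submetrizable (M : Type*) [TopologicalSpace M] : Prop :=
  ∃ d : M → M → ℝ, (∀ x y, d x y = 0 ↔ x = y) ∧ (∀ x y, d x y = d y x) ∧
    (∀ x y z, d x z ≤ d x y + d y z) ∧ Continuous fun p : M × M => d p.1 p.2

/-- A continuous metric yields a continuous map to a countable power of `ℝ` which is injective on a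
given σ-compact set: take the distances to the points of a countable set that is dense there. -/
theorem exists_continuous_injOn {M : Type*} [TopologicalSpace M] (hsub : Submetrizable M)
    {K : ℕ → Set M} (hK : ∀ n, IsCompact (K n)) :
    ∃ D : Set M, D.Countable ∧ ∃ J : M → D → ℝ, Continuous J ∧ Set.InjOn J (⋃ n, K n) := by
  obtain ⟨d, d0, dsymm, dtri, dcont⟩ := hsub
  have cover : ∀ n m : ℕ, ∃ t : Finset M, ∀ x ∈ K n, ∃ p ∈ t, d x p < 1 / ((m : ℝ) + 1) := by
    intro n m
    obtain ⟨t, -, ht⟩ := (hK n).elim_nhds_subcover (fun p => {x | d x p < 1 / ((m : ℝ) + 1)})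
      (fun p _ => by
        refine (isOpen_lt (dcont.comp (Continuous.prodMk_left p)) continuous_const).mem_nhds ?_
        change d p p < _
        rw [(d0 p p).2 rfl]
        positivity)
    refine ⟨t, fun x hx => ?_⟩
    simpa using ht hx
  choose t ht using cover
  refine ⟨⋃ n, ⋃ m, (t n m : Set M),
    Set.countable_iUnion fun n => Set.countable_iUnion fun m => (t n m).countable_toSet,
    fun x p => d x p, continuous_pi fun p => dcont.comp (Continuous.prodMk_left (p : M)), ?_⟩
  intro x hx y _ hxy
  obtain ⟨n, hn⟩ := Set.mem_iUnion.1 hx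
  have dnonneg : 0 ≤ d x y := by
    have h := dtri x y x
    rw [(d0 x x).2 rfl, dsymm y x] at h
    linarith
  refine (d0 x y).1 (le_antisymm (le_of_forall_pos_lt_add fun ε hε => ?_) dnonneg)
  obtain ⟨m, hm⟩ := exists_nat_one_div_lt (half_pos hε)
  obtain ⟨p, hp, hxp⟩ := ht n m x hn
  have hpD : p ∈ ⋃ n, ⋃ m, (t n m : Set M) :=
    Set.mem_iUnion.2 ⟨n, Set.mem_iUnion.2 ⟨m, hp⟩⟩
  have hEq : d x p = d y p := congrFun hxy ⟨p, hpD⟩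
  have h := dtri x p y
  rw [dsymm p y, ← hEq] at h
  linarith

/-- Two finite measures carried by a σ-compact set on which the continuous map `J` is injective
coincide as soon as their images under `J` do. -/
theorem measure_eq_of_map_eq {M Y : Type*} [TopologicalSpace M] [MeasurableSpace M]
    [BorelSpace M] [TopologicalSpace Y] [T2Space Y] [MeasurableSpace Y] [BorelSpace Y]
    {K : ℕ → Set M} (hK : ∀ n, IsCompact (K n)) {J : M → Y} (hJ : Continuous J)
    (hinj : Set.InjOn J (⋃ n, K n)) {μ ν : Measure M} [IsFiniteMeasure μ]
    (hμ : μ (⋃ n, K n)ᶜ = 0) (hν : ν (⋃ n, K n)ᶜ = 0) (h : μ.map J = ν.map J) : μ = ν := by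
  have key : ∀ F : Set M, IsClosed F → ∃ C : Set Y, MeasurableSet C ∧
      ∀ ρ : Measure M, ρ (⋃ n, K n)ᶜ = 0 → ρ F = ρ.map J C := by
    intro F hF
    have hC : MeasurableSet (J '' (F ∩ ⋃ n, K n)) := by
      rw [Set.inter_iUnion, Set.image_iUnion]
      exact MeasurableSet.iUnion fun n =>
        (((hK n).inter_left hF).image hJ).isClosed.measurableSet
    refine ⟨_, hC, fun ρ hρ => ?_⟩
    rw [Measure.map_apply hJ.measurable hC]
    refine measure_congr ?_
    have hae : ∀ᵐ x ∂ρ, x ∈ ⋃ n, K n := hρ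
    filter_upwards [hae] with x hx
    refine propext ⟨fun hxF => ⟨x, ⟨hxF, hx⟩, rfl⟩, ?_⟩
    rintro ⟨y, ⟨hyF, hy⟩, hyx⟩
    exact hinj hy hx hyx ▸ hyF
  refine ext_of_generate_finite {F : Set M | IsClosed F}
    (BorelSpace.measurable_eq.trans borel_eq_generateFrom_isClosed) isPiSystem_isClosed
    (fun F hF => ?_) ?_
  · obtain ⟨C, -, hC⟩ := key F hF
    rw [hC μ hμ, hC ν hν, h]
  · obtain ⟨C, -, hC⟩ := key Set.univ isClosed_univ
    rw [hC μ hμ, hC ν hν, h]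

/-- Prokhorov–Le Cam.  Let `M` be a completely regular (Hausdorff)
submetrizable topological space and let `𝓜` be a uniformly tight family of tight Borel
probability measures on `M`.  Then `𝓜` is sequentially relatively compact for the weak
topology: every sequence in `𝓜` has a subsequence converging weakly (in duality with
bounded continuous functions) to a tight Borel probability measure on `M`. -/
theorem prokhorov_leCam_sequential_compactness
    (M : Type*) [TopologicalSpace M] [T2Space M] [CompletelyRegularSpace M]
    [MeasurableSpace M] [BorelSpace M]
    (hsub : Submetrizable M)
    (𝓜 : Set (Measure M))
    (hprob : ∀ μ ∈ 𝓜, IsProbabilityMeasure μ)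
    (htight : ∀ μ ∈ 𝓜, IsTightMeasure μ)
    (hut : ∀ ε : ℝ, 0 < ε → ∃ K : Set M, IsCompact K ∧
      ∀ μ ∈ 𝓜, μ Kᶜ < ENNReal.ofReal ε)
    (μs : ℕ → Measure M) (hμs : ∀ n, μs n ∈ 𝓜) :
    ∃ k : ℕ → ℕ, StrictMono k ∧ ∃ μ : Measure M,
      IsProbabilityMeasure μ ∧ IsTightMeasure μ ∧
      ∀ f : BoundedContinuousFunction M ℝ,
        Tendsto (fun n => ∫ x, f x ∂(μs (k n))) atTop (𝓝 (∫ x, f x ∂μ)) := by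
  choose K₀ hK₀ hK₀μ using fun n : ℕ => hut (1 / ((n : ℝ) + 1)) Nat.one_div_pos_of_nat
  -- Uniform tightness gives unrelated compact sets; accumulating them makes the sequence monotone.
  let K : ℕ → Set M := Set.accumulate K₀
  let u : ℕ → NNReal := fun n => 1 / ((n : NNReal) + 1)
  have hu : Tendsto u atTop (𝓝 0) :=
    tendsto_one_div_add_atTop_nhds_zero_nat (𝕜 := NNReal)
  have hK : ∀ n, IsCompact (K n) := isCompact_accumulate hK₀
  let S : Set (ProbabilityMeasure M) := {μ | ∀ n, μ (K n)ᶜ ≤ u n}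
  have hS : IsCompact S :=
    isCompact_setOfPred_probabilityMeasure_mass_eq_compl_isCompact_le hu hK
      (Or.inr Set.monotone_accumulate)
  have hSle : ∀ μ ∈ S, ∀ n, (μ : Measure M) (K n)ᶜ ≤ u n := by
    intro μ hμ n
    rw [← ProbabilityMeasure.ennreal_coeFn_eq_coeFn_toMeasure]
    exact_mod_cast hμ n
  have hu' : Tendsto (fun n => (u n : ENNReal)) atTop (𝓝 0) := by
    simpa using ENNReal.tendsto_coe.2 hu
  have hSnull : ∀ μ ∈ S, (μ : Measure M) (⋃ n, K n)ᶜ = 0 := by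
    intro μ hμ
    refine le_antisymm (ge_of_tendsto' hu' fun n => ?_) zero_le
    exact (measure_mono (Set.compl_subset_compl.2 (Set.subset_iUnion K n))).trans (hSle μ hμ n)
  obtain ⟨D, hD, J, hJ, hJinj⟩ := exists_continuous_injOn hsub hK
  have : Countable D := hD.to_subtype
  have : CompactSpace S := isCompact_iff_compactSpace.1 hS
  let Φ : S → ProbabilityMeasure (D → ℝ) := fun μ => μ.1.map hJ.measurable.aemeasurable
  have hΦ : Continuous Φ := (ProbabilityMeasure.continuous_map hJ).comp continuous_subtype_val
  have hΦinj : Function.Injective Φ := by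
    intro μ ν h
    refine Subtype.ext (Subtype.ext ?_)
    exact measure_eq_of_map_eq (μ := (μ.1 : Measure M)) (ν := (ν.1 : Measure M)) hK hJ hJinj
      (hSnull _ μ.2) (hSnull _ ν.2)
      (congrArg (fun ρ : ProbabilityMeasure (D → ℝ) => (ρ : Measure (D → ℝ))) h)
  have : TopologicalSpace.MetrizableSpace S :=
    (hΦ.isClosedEmbedding hΦinj).isEmbedding.metrizableSpace
  let P : ℕ → ProbabilityMeasure M := fun n => ⟨μs n, hprob _ (hμs n)⟩
  let μS : ℕ → S := fun n => ⟨P n, fun m => by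
    rw [← ENNReal.coe_le_coe, ProbabilityMeasure.ennreal_coeFn_eq_coeFn_toMeasure]
    calc μs n (K m)ᶜ ≤ μs n (K₀ m)ᶜ :=
          measure_mono (Set.compl_subset_compl.2 Set.subset_accumulate)
      _ ≤ ENNReal.ofReal (1 / ((m : ℝ) + 1)) := (hK₀μ m _ (hμs n)).le
      _ = u m := by
          rw [← ENNReal.ofReal_coe_nnreal]
          simp [u]⟩
  obtain ⟨ν, k, hk, hlim⟩ := CompactSpace.tendsto_subseq μS
  refine ⟨k, hk, (ν.1 : Measure M), inferInstance, ?_, fun f => ?_⟩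
  · refine le_antisymm ?_ (iSup₂_le fun L _ => measure_mono (Set.subset_univ L))
    have hbound : ∀ n, (ν.1 : Measure M) Set.univ ≤
        (⨆ (L : Set M) (_ : IsCompact L), (ν.1 : Measure M) L) + u n := by
      intro n
      rw [← measure_add_measure_compl (hK n).measurableSet]
      exact add_le_add (le_iSup₂_of_le (K n) (hK n) le_rfl) (hSle _ ν.2 n)
    have hsum := hu'.const_add (⨆ (L : Set M) (_ : IsCompact L), (ν.1 : Measure M) L)
    rw [add_zero] at hsum
    exact ge_of_tendsto' hsum hbound
  · have hlim' := (continuous_subtype_val.tendsto ν).comp hlim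
    exact ProbabilityMeasure.tendsto_iff_forall_integral_tendsto.1 hlim' f
end
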